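/- Let α > 0, d ≥ 1, ℓ = ⌊α⌋⁻, m = C(ℓ+d, ℓ), and fix constants c_L ≥ c_d > 0 and c_N > 0. There exist constants 0 < c₁ ≤ c₂, depending only on α, d, c_d, c_L and c_N, such that the following holds. Let L ∈ (0, 1/2], let x ∈ ℝ^d, and let A ⊂ ℝ^d be a set of m points satisfying the geometric hypotheses at scale L with constants c_L, c_d, c_N. Then the Matérn kernel matrix K_{A,A} is invertible and c₁ L^{2α} Λ ≤ K(x,x) − K_{x,A} K_{A,A}⁻¹ K_{A,x} ≤ c₂ L^{2α} Λ, where Λ = 1 if α ∉ ℕ and Λ = ln(1/L) if α ∈ ℕ. -/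

import Mathlib

open Matrix MeasureTheory

noncomputable section

/-- The Matérn function with regularity `α` on ℝ^d (Fourier normalization):
`K_α(x) = ∫ cos⟨x,ξ⟩ (1+‖ξ‖₂²)^{-(α+d/2)} dξ`. -/
def matern (α : ℝ) (d : ℕ) (x : Fin d → ℝ) : ℝ :=
  ∫ ξ : Fin d → ℝ, Real.cos (∑ j, x j * ξ j) * (1 + ∑ j, ξ j ^ 2) ^ (-(α + (d : ℝ) / 2))

/-- `⌊α⌋⁻`, the largest integer strictly smaller than `α` (for `α > 0`). -/
def lbelow (α : ℝ) : ℕ := Nat.ceil α - 1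

/-- `α` is a (nonnegative) integer. -/
def IsNatVal (α : ℝ) : Prop := ∃ n : ℕ, α = n

/-- The Euclidean norm `‖x‖₂` on ℝ^d. -/
def nrm {d : ℕ} (x : Fin d → ℝ) : ℝ := Real.sqrt (∑ j, x j ^ 2)

/-- Partial derivative in the `j`-th coordinate. -/
def pder (d : ℕ) (j : Fin d) (f : (Fin d → ℝ) → ℝ) : (Fin d → ℝ) → ℝ :=
  fun x => fderiv ℝ f x (Pi.single j 1)

/-- The iterated partial derivative `∂^k` associated with a multi-index `k ∈ ℕ^d`. -/
def mder (d : ℕ) (k : Fin d → ℕ) (f : (Fin d → ℝ) → ℝ) : (Fin d → ℝ) → ℝ :=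
  (List.finRange d).foldr (fun j g => (pder d j)^[k j] g) f

/-- Mixed derivative `F^{(k₁,k₂)}(x₁,x₂) = ∂^{k₁}_{x₁} ∂^{k₂}_{x₂} F(x₁,x₂)`. -/
def mder2 (d : ℕ) (k₁ k₂ : Fin d → ℕ) (F : (Fin d → ℝ) → (Fin d → ℝ) → ℝ)
    (x₁ x₂ : Fin d → ℝ) : ℝ :=
  mder d k₁ (fun y => mder d k₂ (F y) x₂) x₁

/-- The Matérn kernel matrix `K_{A,A} = (K(w_i, w_j))_{i,j}`. -/
def maternMat (α : ℝ) (d : ℕ) {n : ℕ} (w : Fin n → Fin d → ℝ) :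
    Matrix (Fin n) (Fin n) ℝ :=
  Matrix.of fun i j => matern α d (w i - w j)

/-- The Matérn kernel column vector `K_{A,x} = (K(w_i, x))_i`. -/
def maternVec (α : ℝ) (d : ℕ) {n : ℕ} (w : Fin n → Fin d → ℝ) (x : Fin d → ℝ) :
    Fin n → ℝ :=
  fun i => matern α d (w i - x)

/-- The conditional kernel `K̃(x₁,x₂) = K(x₁,x₂) − K_{x₁,A} K_{A,A}⁻¹ K_{A,x₂}`. -/
def condK (α : ℝ) (d : ℕ) {n : ℕ} (w : Fin n → Fin d → ℝ) (x₁ x₂ : Fin d → ℝ) : ℝ :=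
  matern α d (x₁ - x₂) -
    maternVec α d w x₁ ⬝ᵥ ((maternMat α d w)⁻¹ *ᵥ maternVec α d w x₂)

/-- The unit cube `[0,1]^d`. -/
def unitCube (d : ℕ) : Set (Fin d → ℝ) := {x | ∀ t, 0 ≤ x t ∧ x t ≤ 1}

/-- `A = {w_1,…,w_m}` is a norming set for `𝒫_l(Ω)` with norming constant `c`. -/
def IsNorming {d : ℕ} (l : ℕ) (Ω : Set (Fin d → ℝ)) {m : ℕ}
    (w : Fin m → Fin d → ℝ) (c : ℝ) : Prop :=
  ∀ P : MvPolynomial (Fin d) ℝ, P.totalDegree ≤ l →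
    ∀ x ∈ Ω, |MvPolynomial.eval x P| ≤ c * ⨆ i : Fin m, |MvPolynomial.eval (w i) P|

/-- Axis-parallel cube with corner `z` and side length `s`. -/
def cube (d : ℕ) (z : Fin d → ℝ) (s : ℝ) : Set (Fin d → ℝ) :=
  {y | ∀ t, z t ≤ y t ∧ y t ≤ z t + s}

/-- Geometric hypotheses at scale `L` with constants `c_L, c_d, c_N`: `A ∪ {x}` lies in an
axis-parallel cube of side length at most `c_L·L`, the points `w_1,…,w_m, x` are pairwise at
`‖·‖_∞`-distance at least `c_d·L`, and `A` is a norming set for `𝒫_{⌊α⌋⁻}` of that cube with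
norming constant `c_N`. -/
def GeomHyp (α : ℝ) (d : ℕ) (cL cd cN L : ℝ) {m : ℕ}
    (w : Fin m → Fin d → ℝ) (x : Fin d → ℝ) : Prop :=
  ∃ z : Fin d → ℝ, ∃ s : ℝ, 0 ≤ s ∧ s ≤ cL * L ∧
    (∀ i, w i ∈ cube d z s) ∧ x ∈ cube d z s ∧
    (∀ i j, i ≠ j → ∃ t, cd * L ≤ |w i t - w j t|) ∧
    (∀ i, ∃ t, cd * L ≤ |w i t - x t|) ∧
    IsNorming (lbelow α) (cube d z s) w cN

/-- The conditional variance `K(x,x) − K_{x,A} K_{A,A}⁻¹ K_{A,x}`. -/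
def condVar (α : ℝ) (d : ℕ) {n : ℕ} (w : Fin n → Fin d → ℝ) (x : Fin d → ℝ) : ℝ :=
  matern α d (x - x) -
    maternVec α d w x ⬝ᵥ ((maternMat α d w)⁻¹ *ᵥ maternVec α d w x)

/-
The conditional variance is the least mean squared error of a linear predictor `∑ a_i f(w_i)` of
`f(x)`; in Fourier space this error is the energy `∫ |ρ(ξ)|² (1 + ‖ξ‖²)^(-(α + d/2)) dξ`, where `ρ`
is the Fourier transform of the residual functional `r = δ_x - ∑ a_i δ_{w_i}`. Write
`n = ⌈α⌉ = ⌊α⌋⁻ + 1`.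

Upper bound: with Lagrange coefficients `a`, `r` annihilates the polynomials of degree less than
`n`, hence `|ρ(ξ)|` is of order at most `min(1, (L‖ξ‖)^n)`. Integrating against the weight gives
`L^(2α)`, with a logarithm exactly when `n = α`: then all dyadic shells between `‖ξ‖ = 1` and
`‖ξ‖ = 1/L` count alike.

Lower bound: whatever `a` is, `r` takes the value `1` on some polynomial of degree at most `n` that
vanishes on `A`. Rescaling by `R` and cutting off, this value is controlled by the energy of `r`
with respect to a weight of higher order living at scale `R`. Summed over the dyadic scales `R`
between `L` and `1`, these weights are dominated by the original one; when `n = α` each of the about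
`ln(1/L)` scales contributes the same amount.
-/

section BesselWeight

variable {d : ℕ} {p : ℝ}

/-- The Bessel potential weight `(1 + ‖ξ‖₂²) ^ (-p)`. -/
def besselWeight (p : ℝ) (ξ : Fin d → ℝ) : ℝ := (1 + ∑ j, ξ j ^ 2) ^ (-p)

lemma one_le_one_add_sum_sq (ξ : Fin d → ℝ) : 1 ≤ 1 + ∑ j, ξ j ^ 2 :=
  le_add_of_nonneg_right (Finset.sum_nonneg fun _ _ => sq_nonneg _)

lemma besselWeight_nonneg (p : ℝ) (ξ : Fin d → ℝ) : 0 ≤ besselWeight p ξ :=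
  Real.rpow_nonneg (zero_le_one.trans (one_le_one_add_sum_sq ξ)) _

lemma besselWeight_eq_norm_toLp (p : ℝ) (ξ : Fin d → ℝ) :
    besselWeight p ξ = (1 + ‖WithLp.toLp 2 ξ‖ ^ 2) ^ (-p) := by
  simp only [besselWeight, EuclideanSpace.norm_sq_eq, Real.norm_eq_abs, sq_abs]

lemma integrable_besselWeight (hp : (d : ℝ) / 2 < p) :
    Integrable (besselWeight p : (Fin d → ℝ) → ℝ) := by
  have h : Integrable fun v : EuclideanSpace ℝ (Fin d) => (1 + ‖v‖ ^ 2) ^ (-(2 * p) / 2) :=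
    integrable_rpow_neg_one_add_norm_sq (by rw [finrank_euclideanSpace_fin]; linarith)
  refine ((PiLp.volume_preserving_toLp (Fin d)).integrable_comp_of_integrable h).congr
    (.of_forall fun ξ => ?_)
  rw [Function.comp_apply, besselWeight_eq_norm_toLp]
  ring_nf

end BesselWeight

section ExpSum

variable {ι : Type*} [Fintype ι] {d : ℕ}

/-- The exponential sum `∑ i, b i * exp (I * ⟨y i, ξ⟩)` with nodes `y i`, coefficients `b i` and
frequency `ξ`. -/
def expSum (y : ι → Fin d → ℝ) (b : ι → ℝ) (ξ : Fin d → ℝ) : ℂ :=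
  ∑ i, (b i : ℂ) * Complex.exp ((y i ⬝ᵥ ξ : ℝ) * Complex.I)

lemma continuous_expSum (y : ι → Fin d → ℝ) (b : ι → ℝ) : Continuous (expSum y b) := by
  unfold expSum dotProduct
  fun_prop

lemma norm_expSum_le (y : ι → Fin d → ℝ) (b : ι → ℝ) (ξ : Fin d → ℝ) :
    ‖expSum y b ξ‖ ≤ ∑ i, |b i| := by
  refine (norm_sum_le _ _).trans (Finset.sum_le_sum fun i _ => ?_)
  rw [norm_mul, Complex.norm_exp_ofReal_mul_I, mul_one, Complex.norm_real, Real.norm_eq_abs]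

lemma integrable_norm_expSum_pow_mul (y : ι → Fin d → ℝ) (b : ι → ℝ) (m : ℕ)
    {W : (Fin d → ℝ) → ℝ} (hW : Integrable W) :
    Integrable fun ξ => ‖expSum y b ξ‖ ^ m * W ξ := by
  refine hW.bdd_mul (c := (∑ i, |b i|) ^ m)
    ((continuous_expSum y b).norm.pow m).aestronglyMeasurable (.of_forall fun ξ => ?_)
  rw [norm_pow, norm_norm]
  gcongr
  exact norm_expSum_le y b ξ

lemma norm_expSum_add_const (y : ι → Fin d → ℝ) (v : Fin d → ℝ) (b : ι → ℝ) (ξ : Fin d → ℝ) :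
    ‖expSum (fun i => y i + v) b ξ‖ = ‖expSum y b ξ‖ := by
  have h : expSum (fun i => y i + v) b ξ =
      expSum y b ξ * Complex.exp ((v ⬝ᵥ ξ : ℝ) * Complex.I) := by
    simp only [expSum, Finset.sum_mul, add_dotProduct, Complex.ofReal_add, add_mul,
      Complex.exp_add, mul_assoc]
  rw [h, norm_mul, Complex.norm_exp_ofReal_mul_I, mul_one]

lemma norm_expSum_sq (y : ι → Fin d → ℝ) (b : ι → ℝ) (ξ : Fin d → ℝ) :
    ‖expSum y b ξ‖ ^ 2 = ∑ i, ∑ j, b i * b j * Real.cos ((y i - y j) ⬝ᵥ ξ) := by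
  have hre : (expSum y b ξ).re = ∑ i, b i * Real.cos (y i ⬝ᵥ ξ) := by
    simp only [expSum, Complex.re_sum, Complex.re_ofReal_mul, Complex.exp_ofReal_mul_I_re]
  have him : (expSum y b ξ).im = ∑ i, b i * Real.sin (y i ⬝ᵥ ξ) := by
    simp only [expSum, Complex.im_sum, Complex.im_ofReal_mul, Complex.exp_ofReal_mul_I_im]
  rw [Complex.sq_norm, Complex.normSq_apply, hre, him, Finset.sum_mul_sum, Finset.sum_mul_sum]
  simp only [← Finset.sum_add_distrib, sub_dotProduct, Real.cos_sub]
  exact Finset.sum_congr rfl fun i _ => Finset.sum_congr rfl fun j _ => by ring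

/-- The squared norm of the functional `f ↦ ∑ i, b i * f (y i)` in the dual of the Bessel potential
space of order `p`, computed in Fourier space. -/
def energy (p : ℝ) (y : ι → Fin d → ℝ) (b : ι → ℝ) : ℝ :=
  ∫ ξ, ‖expSum y b ξ‖ ^ 2 * besselWeight p ξ

lemma energy_nonneg (p : ℝ) (y : ι → Fin d → ℝ) (b : ι → ℝ) : 0 ≤ energy p y b :=
  integral_nonneg fun ξ => mul_nonneg (sq_nonneg _) (besselWeight_nonneg p ξ)

lemma energy_add_const (p : ℝ) (y : ι → Fin d → ℝ) (v : Fin d → ℝ) (b : ι → ℝ) :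
    energy p (fun i => y i + v) b = energy p y b := by
  simp only [energy, norm_expSum_add_const]

lemma energy_inv_smul {R : ℝ} (hR : 0 < R) (p : ℝ) (y : ι → Fin d → ℝ) (b : ι → ℝ) :
    energy p (R⁻¹ • y) b = R ^ d * ∫ ξ, ‖expSum y b ξ‖ ^ 2 * besselWeight p (R • ξ) := by
  have h := Measure.integral_comp_smul (volume : Measure (Fin d → ℝ))
    (fun ξ => ‖expSum (R⁻¹ • y) b ξ‖ ^ 2 * besselWeight p ξ) R
  have hexp (ξ : Fin d → ℝ) : expSum (R⁻¹ • y) b (R • ξ) = expSum y b ξ := by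
    simp only [expSum, Pi.smul_apply, smul_dotProduct, dotProduct_smul, smul_smul,
      mul_inv_cancel₀ hR.ne', one_smul]
  simp only [hexp] at h
  rw [h, Module.finrank_fin_fun, abs_of_nonneg (by positivity), smul_eq_mul,
    mul_inv_cancel_left₀ (by positivity), energy]

lemma sum_mul_matern_eq_energy {α : ℝ} (hα : 0 < α) (y : ι → Fin d → ℝ) (b : ι → ℝ) :
    ∑ i, ∑ j, b i * b j * matern α d (y i - y j) = energy (α + (d : ℝ) / 2) y b := by
  have hint (i j : ι) : Integrable fun ξ : Fin d → ℝ =>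
      b i * b j * (Real.cos ((y i - y j) ⬝ᵥ ξ) * besselWeight (α + (d : ℝ) / 2) ξ) := by
    refine Integrable.const_mul ?_ _
    refine (integrable_besselWeight (by linarith)).bdd_mul (c := 1) ?_
      (.of_forall fun ξ => Real.abs_cos_le_one _)
    exact Continuous.aestronglyMeasurable (by unfold dotProduct; fun_prop)
  simp_rw [energy, norm_expSum_sq, Finset.sum_mul, mul_assoc (b _ * b _)]
  rw [integral_finsetSum _ fun i _ => integrable_finsetSum _ fun j _ => hint i j]
  refine Finset.sum_congr rfl fun i _ => ?_
  rw [integral_finsetSum _ fun j _ => hint i j]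
  refine Finset.sum_congr rfl fun j _ => ?_
  rw [integral_const_mul]
  rfl

end ExpSum

section TestFunctions

open scoped FourierTransform ContDiff SchwartzMap

/-- Cut `f` off by a bump function and apply Fourier inversion. -/
lemma exists_schwartz_eq_integral_exp {V : Type*} [NormedAddCommGroup V] [InnerProductSpace ℝ V]
    [FiniteDimensional ℝ V] [MeasurableSpace V] [BorelSpace V] {f : V → ℝ} (hf : ContDiff ℝ ∞ f)
    {K : Set V} (hK : Bornology.IsBounded K) :
    ∃ G : 𝓢(V, ℂ), ∀ u ∈ K, (f u : ℂ) = ∫ v, G v * Complex.exp (inner ℝ u v * Complex.I) := by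
  obtain ⟨r, hr, hKr⟩ := hK.subset_closedBall_lt 0 0
  let χ : ContDiffBump (0 : V) := ⟨r, r + 1, hr, lt_add_one r⟩
  let F₀ : V → ℂ := fun u => ((f ((2 * Real.pi) • u) * χ u : ℝ) : ℂ)
  have hsupp : HasCompactSupport F₀ :=
    (χ.hasCompactSupport.mul_left (f := fun u => f ((2 * Real.pi) • u))).comp_left
      (g := fun t : ℝ => (t : ℂ)) Complex.ofReal_zero
  have hsmooth : ContDiff ℝ ∞ F₀ :=
    Complex.ofRealCLM.contDiff.comp ((hf.comp (contDiff_const_smul _)).mul χ.contDiff)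
  let F : 𝓢(V, ℂ) := hsupp.toSchwartzMap hsmooth
  refine ⟨𝓕 F, fun u hu => ?_⟩
  have hχ : χ ((2 * Real.pi)⁻¹ • u) = 1 := by
    refine χ.one_of_mem_closedBall (mem_closedBall_zero_iff.2 ?_)
    have hπ : (2 * Real.pi)⁻¹ ≤ 1 := inv_le_one_of_one_le₀ (by linarith [Real.pi_gt_three])
    rw [norm_smul, Real.norm_of_nonneg (by positivity)]
    exact (mul_le_of_le_one_left (norm_nonneg u) hπ).trans (mem_closedBall_zero_iff.1 (hKr hu))
  have hF : F ((2 * Real.pi)⁻¹ • u) = f u := by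
    change ((f ((2 * Real.pi) • (2 * Real.pi)⁻¹ • u) * χ ((2 * Real.pi)⁻¹ • u) : ℝ) : ℂ) = f u
    rw [hχ, mul_one, smul_inv_smul₀ (by positivity)]
  have hinv : 𝓕⁻ (𝓕 F) = F := FourierTransform.fourierInv_fourier_eq F
  rw [← hF, ← hinv, SchwartzMap.fourierInv_coe, Real.fourierInv_eq', hinv]
  refine integral_congr_ae (.of_forall fun v => ?_)
  simp only [smul_eq_mul]
  rw [mul_comm, real_inner_smul_right, real_inner_comm, mul_inv_cancel_left₀ (by positivity)]

lemma exists_norm_schwartz_le {V E : Type*} [NormedAddCommGroup V] [NormedSpace ℝ V]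
    [NormedAddCommGroup E] [NormedSpace ℝ E] (G : 𝓢(V, E)) (p : ℝ) :
    ∃ C : ℝ, ∀ v, ‖G v‖ ≤ C * (1 + ‖v‖ ^ 2) ^ (-p) := by
  set N := ⌈p⌉₊
  refine ⟨2 ^ (2 * N) * (Finset.Iic (2 * N, 0)).sup
    (fun m => SchwartzMap.seminorm ℝ m.1 m.2) G, fun v => ?_⟩
  have hG := SchwartzMap.one_add_le_sup_seminorm_apply (𝕜 := ℝ) (m := (2 * N, 0)) le_rfl le_rfl G v
  rw [norm_iteratedFDeriv_zero] at hG
  have hp : (1 + ‖v‖ ^ 2) ^ p ≤ (1 + ‖v‖) ^ (2 * N) := calc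
    (1 + ‖v‖ ^ 2) ^ p ≤ (1 + ‖v‖ ^ 2) ^ (N : ℝ) :=
      Real.rpow_le_rpow_of_exponent_le (by nlinarith [norm_nonneg v]) (Nat.le_ceil p)
    _ ≤ (1 + ‖v‖) ^ (2 * N) := by
      rw [Real.rpow_natCast, pow_mul]
      gcongr
      nlinarith [norm_nonneg v]
  rw [Real.rpow_neg (by positivity), ← div_eq_mul_inv, le_div_iff₀ (by positivity), mul_comm]
  exact (mul_le_mul_of_nonneg_right hp (norm_nonneg _)).trans hG

lemma exists_density_eq_integral_exp {d : ℕ} {f : (Fin d → ℝ) → ℝ} (hf : ContDiff ℝ ∞ f)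
    {K : Set (Fin d → ℝ)} (hK : Bornology.IsBounded K) (p : ℝ) :
    ∃ (h : (Fin d → ℝ) → ℂ) (C : ℝ), Continuous h ∧ (∀ ξ, ‖h ξ‖ ≤ C * besselWeight p ξ) ∧
      ∀ u ∈ K, (f u : ℂ) = ∫ ξ, h ξ * Complex.exp ((u ⬝ᵥ ξ : ℝ) * Complex.I) := by
  obtain ⟨G, hG⟩ := exists_schwartz_eq_integral_exp (V := EuclideanSpace ℝ (Fin d))
    (hf.comp PiLp.contDiff_ofLp) ((PiLp.lipschitzWith_toLp 2 fun _ : Fin d => ℝ).isBounded_image hK)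
  obtain ⟨C, hGC⟩ := exists_norm_schwartz_le G p
  refine ⟨fun ξ => G (WithLp.toLp 2 ξ), C, by fun_prop, fun ξ => ?_, fun u hu => ?_⟩
  · exact besselWeight_eq_norm_toLp p ξ ▸ hGC _
  · have hGu := hG _ (Set.mem_image_of_mem _ hu)
    rw [← (PiLp.volume_preserving_toLp (Fin d)).integral_comp
      (MeasurableEquiv.toLp 2 _).measurableEmbedding] at hGu
    simpa only [Function.comp_apply, EuclideanSpace.inner_toLp_toLp, star_trivial,
      dotProduct_comm u] using hGu

lemma sq_integral_mul_le {X : Type*} [MeasurableSpace X] {μ : Measure X} {f W : X → ℝ}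
    (hW0 : ∀ x, 0 ≤ W x) (hW : Integrable W μ) (h1 : Integrable (fun x => f x * W x) μ)
    (h2 : Integrable (fun x => f x ^ 2 * W x) μ) :
    (∫ x, f x * W x ∂μ) ^ 2 ≤ (∫ x, W x ∂μ) * ∫ x, f x ^ 2 * W x ∂μ := by
  have key (c : ℝ) : 0 ≤ (∫ x, W x ∂μ) * (c * c) + (-2 * ∫ x, f x * W x ∂μ) * c +
      ∫ x, f x ^ 2 * W x ∂μ := by
    have hc : 0 ≤ ∫ x, (f x - c) ^ 2 * W x ∂μ :=
      integral_nonneg fun x => mul_nonneg (sq_nonneg _) (hW0 x)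
    have hexpand : (fun x => (f x - c) ^ 2 * W x) =
        fun x => (f x ^ 2 * W x + (-2 * c) * (f x * W x)) + (c * c) * W x := by
      ext x; ring
    rw [hexpand, integral_add (by exact h2.add (h1.const_mul _)) (hW.const_mul _),
      integral_add h2 (h1.const_mul _), integral_const_mul, integral_const_mul] at hc
    linarith
  have hdiscrim := discrim_le_zero key
  rw [discrim] at hdiscrim
  nlinarith

lemma ofReal_sum_mul_eq_integral_mul_expSum {ι : Type*} [Fintype ι] {d : ℕ}
    {h : (Fin d → ℝ) → ℂ} (hh : Integrable h) {y : ι → Fin d → ℝ} {v : ι → ℝ} (b : ι → ℝ)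
    (hv : ∀ i, (v i : ℂ) = ∫ ξ, h ξ * Complex.exp ((y i ⬝ᵥ ξ : ℝ) * Complex.I)) :
    ((∑ i, b i * v i : ℝ) : ℂ) = ∫ ξ, h ξ * expSum y b ξ := by
  have hint (i : ι) : Integrable fun ξ : Fin d → ℝ =>
      (b i : ℂ) * (h ξ * Complex.exp ((y i ⬝ᵥ ξ : ℝ) * Complex.I)) := by
    refine Integrable.const_mul (hh.mul_bdd (c := 1) ?_ (.of_forall fun ξ => ?_)) _
    · exact Continuous.aestronglyMeasurable (by unfold dotProduct; fun_prop)
    · rw [Complex.norm_exp_ofReal_mul_I]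
  simp only [expSum, Finset.mul_sum, mul_left_comm (h _)]
  rw [integral_finsetSum _ fun i _ => hint i, Complex.ofReal_sum]
  exact Finset.sum_congr rfl fun i _ => by rw [integral_const_mul, Complex.ofReal_mul, hv]

lemma exists_sq_sum_mul_le_energy {d : ℕ} {p : ℝ} (hp : (d : ℝ) / 2 < p)
    {f : (Fin d → ℝ) → ℝ} (hf : ContDiff ℝ ∞ f) {K : Set (Fin d → ℝ)}
    (hK : Bornology.IsBounded K) :
    ∃ C : ℝ, 0 ≤ C ∧ ∀ {ι : Type*} [Fintype ι] (y : ι → Fin d → ℝ) (b : ι → ℝ),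
      (∀ i, y i ∈ K) → (∑ i, b i * f (y i)) ^ 2 ≤ C * energy p y b := by
  obtain ⟨h, C, hcont, hbound, hrep⟩ := exists_density_eq_integral_exp hf hK p
  have hW := integrable_besselWeight hp
  refine ⟨C ^ 2 * ∫ ξ : Fin d → ℝ, besselWeight p ξ,
    mul_nonneg (sq_nonneg _) (integral_nonneg fun _ => besselWeight_nonneg _ _), ?_⟩
  intro ι _ y b hy
  have hsum : ((∑ i, b i * f (y i) : ℝ) : ℂ) = ∫ ξ, h ξ * expSum y b ξ :=
    ofReal_sum_mul_eq_integral_mul_expSum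
      ((hW.const_mul C).mono' hcont.aestronglyMeasurable (.of_forall hbound)) b
      fun i => hrep (y i) (hy i)
  have h1 := integrable_norm_expSum_pow_mul y b 1 hW
  simp only [pow_one] at h1
  have habs : |∑ i, b i * f (y i)| ≤ C * ∫ ξ, ‖expSum y b ξ‖ * besselWeight p ξ := by
    rw [← Real.norm_eq_abs, ← Complex.norm_real, hsum, ← integral_const_mul]
    refine norm_integral_le_of_norm_le (h1.const_mul C) (.of_forall fun ξ => ?_)
    rw [norm_mul, mul_left_comm, mul_comm]
    exact mul_le_mul_of_nonneg_left (hbound ξ) (norm_nonneg _)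
  calc (∑ i, b i * f (y i)) ^ 2
      ≤ (C * ∫ ξ, ‖expSum y b ξ‖ * besselWeight p ξ) ^ 2 := by rw [← sq_abs]; gcongr
    _ = C ^ 2 * (∫ ξ, ‖expSum y b ξ‖ * besselWeight p ξ) ^ 2 := mul_pow _ _ _
    _ ≤ C ^ 2 * ((∫ ξ : Fin d → ℝ, besselWeight p ξ) * energy p y b) := by
        gcongr
        exact sq_integral_mul_le (besselWeight_nonneg p) hW h1
          (integrable_norm_expSum_pow_mul y b 2 hW)
    _ = _ := (mul_assoc _ _ _).symm

end TestFunctions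

section ConditionalVariance

open scoped ContDiff

variable {α : ℝ} {d n : ℕ} {w : Fin n → Fin d → ℝ}

lemma energy_pos {ι : Type*} [Fintype ι] {p : ℝ} (hp : (d : ℝ) / 2 < p) {y : ι → Fin d → ℝ}
    (hy : Function.Injective y) {b : ι → ℝ} (hb : b ≠ 0) : 0 < energy p y b := by
  classical
  obtain ⟨i, hi⟩ := Function.ne_iff.1 hb
  let f : (Fin d → ℝ) → ℝ := fun u => ∏ j ∈ Finset.univ.erase i, ∑ t, (u t - y j t) ^ 2
  have hf : ContDiff ℝ ∞ f := by
    refine contDiff_prod fun j _ => ContDiff.sum fun t _ => ?_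
    fun_prop
  have hf_ne (j : ι) (hj : j ≠ i) : f (y j) = 0 :=
    Finset.prod_eq_zero (Finset.mem_erase.2 ⟨hj, Finset.mem_univ j⟩) (by simp)
  have hf_self : f (y i) ≠ 0 := by
    refine Finset.prod_ne_zero_iff.2 fun j hj => ?_
    obtain ⟨t, ht⟩ := Function.ne_iff.1 (hy.ne (Finset.ne_of_mem_erase hj).symm)
    exact (Finset.sum_pos' (fun s _ => sq_nonneg (y i s - y j s))
      ⟨t, Finset.mem_univ t, sq_pos_iff.2 (sub_ne_zero.2 ht)⟩).ne'
  obtain ⟨C, hC, hle⟩ := exists_sq_sum_mul_le_energy hp hf (Set.finite_range y).isBounded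
  have hsum : ∑ j, b j * f (y j) = b i * f (y i) :=
    Finset.sum_eq_single_of_mem i (Finset.mem_univ i) fun j _ hj => by rw [hf_ne j hj, mul_zero]
  have hpos : 0 < (b i * f (y i)) ^ 2 := by
    have := mul_ne_zero hi hf_self
    positivity
  exact pos_of_mul_pos_right (hpos.trans_le (hsum ▸ hle y b Set.mem_range_self)) hC

lemma matern_neg (α : ℝ) (d : ℕ) (x : Fin d → ℝ) : matern α d (-x) = matern α d x := by
  simp only [matern, Pi.neg_apply, neg_mul, Finset.sum_neg_distrib, Real.cos_neg]

lemma dotProduct_maternMat_mulVec (hα : 0 < α) (w : Fin n → Fin d → ℝ) (a : Fin n → ℝ) :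
    a ⬝ᵥ (maternMat α d w *ᵥ a) = energy (α + (d : ℝ) / 2) w a := by
  rw [← sum_mul_matern_eq_energy hα]
  simp only [dotProduct, Matrix.mulVec, maternMat, Matrix.of_apply, Finset.mul_sum]
  exact Finset.sum_congr rfl fun i _ => Finset.sum_congr rfl fun j _ => by ring

lemma posDef_maternMat (hα : 0 < α) (hw : Function.Injective w) : (maternMat α d w).PosDef := by
  refine Matrix.PosDef.of_dotProduct_mulVec_pos ?_ fun a ha => ?_
  · ext i j
    simp only [Matrix.conjTranspose_apply, maternMat, Matrix.of_apply, star_trivial]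
    rw [← matern_neg, neg_sub]
  · rw [star_trivial, dotProduct_maternMat_mulVec hα]
    exact energy_pos (by linarith) hw ha

/-- The mean squared error of predicting `f x` by `∑ i, a i * f (w i)`, for a centred random field
`f` with the Matérn covariance. -/
def predictionError (α : ℝ) (w : Fin n → Fin d → ℝ) (x : Fin d → ℝ) (a : Fin n → ℝ) : ℝ :=
  energy (α + (d : ℝ) / 2) (fun o : Option (Fin n) => o.elim x w) (fun o => o.elim 1 (-a))

lemma predictionError_eq (hα : 0 < α) (w : Fin n → Fin d → ℝ) (x : Fin d → ℝ) (a : Fin n → ℝ) :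
    predictionError α w x a = matern α d (x - x) - 2 * (a ⬝ᵥ maternVec α d w x) +
      a ⬝ᵥ (maternMat α d w *ᵥ a) := by
  have hswap (i : Fin n) : matern α d (x - w i) = matern α d (w i - x) := by
    rw [← matern_neg, neg_sub]
  rw [predictionError, ← sum_mul_matern_eq_energy hα]
  simp only [Fintype.sum_option, Option.elim_none, Option.elim_some, Pi.neg_apply, hswap,
    dotProduct, Matrix.mulVec, maternMat, maternVec, Matrix.of_apply, Finset.mul_sum,
    Finset.sum_add_distrib, one_mul, mul_one, neg_mul, mul_neg, Finset.sum_neg_distrib]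
  simp only [← Finset.mul_sum, mul_assoc, mul_comm (matern _ _ _) (a _)]
  ring

lemma predictionError_eq_condVar_add (hα : 0 < α) (hw : Function.Injective w) (x : Fin d → ℝ)
    (a : Fin n → ℝ) :
    predictionError α w x a = condVar α d w x +
      energy (α + (d : ℝ) / 2) w (a - (maternMat α d w)⁻¹ *ᵥ maternVec α d w x) := by
  have hK := posDef_maternMat hα hw
  set K := maternMat α d w with hKdef
  set k := maternVec α d w x
  have hKu : K *ᵥ (K⁻¹ *ᵥ k) = k := by
    rw [Matrix.mulVec_mulVec, Matrix.mul_nonsing_inv _ (K.isUnit_iff_isUnit_det.1 hK.isUnit),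
      Matrix.one_mulVec]
  have hsymm : (K⁻¹ *ᵥ k) ⬝ᵥ (K *ᵥ a) = a ⬝ᵥ k := by
    rw [Matrix.dotProduct_mulVec, ← Matrix.mulVec_transpose,
      (conjTranspose_eq_transpose_of_trivial K).symm.trans hK.isHermitian, hKu, dotProduct_comm]
  rw [predictionError_eq hα, ← dotProduct_maternMat_mulVec hα, condVar, ← hKdef,
    Matrix.mulVec_sub, sub_dotProduct, dotProduct_sub, dotProduct_sub, hKu, hsymm,
    dotProduct_comm (K⁻¹ *ᵥ k)]
  ring

lemma isLeast_condVar (hα : 0 < α) (hw : Function.Injective w) (x : Fin d → ℝ) :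
    IsLeast (Set.range (predictionError α w x)) (condVar α d w x) := by
  constructor
  · refine ⟨(maternMat α d w)⁻¹ *ᵥ maternVec α d w x, ?_⟩
    rw [predictionError_eq_condVar_add hα hw, sub_self]
    simp [energy, expSum]
  · rintro _ ⟨a, rfl⟩
    rw [predictionError_eq_condVar_add hα hw]
    exact le_add_of_nonneg_right (energy_nonneg _ _ _)

end ConditionalVariance

section Interpolation

open MvPolynomial

variable {σ K ι : Type*} [Field K]

/-- The points `y i` determine polynomials of total degree at most `n`: only the zero polynomial
vanishes at all of them. -/
def IsDetermining (n : ℕ) (y : ι → σ → K) : Prop :=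
  ∀ P : MvPolynomial σ K, P.totalDegree ≤ n → (∀ i, eval (y i) P = 0) → P = 0

/-- Evaluation of polynomials of total degree at most `n` at the points `y i`. -/
def evalPoints (n : ℕ) (y : ι → σ → K) : restrictTotalDegree σ K n →ₗ[K] ι → K :=
  LinearMap.pi fun i => (aeval (y i)).toLinearMap ∘ₗ (restrictTotalDegree σ K n).subtype

lemma evalPoints_apply (n : ℕ) (y : ι → σ → K) (P : restrictTotalDegree σ K n) (i : ι) :
    evalPoints n y P i = eval (y i) (P : MvPolynomial σ K) := by
  simp only [evalPoints, LinearMap.pi_apply, LinearMap.comp_apply, Submodule.subtype_apply,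
    AlgHom.toLinearMap_apply, aeval_eq_eval]

lemma IsDetermining.ker_evalPoints {n : ℕ} {y : ι → σ → K} (h : IsDetermining n y) :
    LinearMap.ker (evalPoints n y) = ⊥ :=
  LinearMap.ker_eq_bot'.2 fun P hP => Subtype.ext <|
    h P ((mem_restrictTotalDegree _ _ _).1 P.2) fun i => by
      rw [← evalPoints_apply, hP, Pi.zero_apply]

lemma IsDetermining.exists_interpolation [Fintype ι] {n : ℕ} {y : ι → σ → K}
    (h : IsDetermining n y) :
    ∃ e : ι → MvPolynomial σ K, (∀ i, (e i).totalDegree ≤ n) ∧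
      ∀ P : MvPolynomial σ K, P.totalDegree ≤ n → P = ∑ i, eval (y i) P • e i := by
  classical
  obtain ⟨g, hg⟩ := LinearMap.exists_leftInverse_of_injective _ h.ker_evalPoints
  refine ⟨fun i => g (Pi.single i 1), fun i => (mem_restrictTotalDegree _ _ _).1 (g _).2,
    fun P hP => ?_⟩
  let Q : restrictTotalDegree σ K n := ⟨P, (mem_restrictTotalDegree _ _ _).2 hP⟩
  have hQ : Q = ∑ i, eval (y i) P • g (Pi.single i 1) := by
    conv_lhs => rw [← LinearMap.id_apply (R := K) Q, ← hg, LinearMap.comp_apply,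
      LinearMap.pi_apply_eq_sum_univ]
    refine Finset.sum_congr rfl fun i _ => ?_
    rw [evalPoints_apply]
    congr 2
    funext j
    simp only [Pi.single_apply, eq_comm]
  simpa only [Submodule.coe_sum, Submodule.coe_smul] using congrArg Subtype.val hQ

lemma IsDetermining.exists_lagrange [Finite σ] [Fintype ι] [DecidableEq ι] {n : ℕ}
    {y : ι → σ → K} (h : IsDetermining n y)
    (hcard : Module.finrank K (restrictTotalDegree σ K n) = Fintype.card ι) :
    ∃ e : ι → MvPolynomial σ K, (∀ i, (e i).totalDegree ≤ n) ∧
      (∀ i j, eval (y j) (e i) = if i = j then 1 else 0) ∧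
      ∀ P : MvPolynomial σ K, P.totalDegree ≤ n → P = ∑ i, eval (y i) P • e i := by
  obtain ⟨e, hdeg, hrep⟩ := h.exists_interpolation
  refine ⟨e, hdeg, fun i j => ?_, hrep⟩
  have hsurj : Function.Surjective (evalPoints n y) :=
    (LinearMap.injective_iff_surjective_of_finrank_eq_finrank
      (hcard.trans (Module.finrank_fintype_fun_eq_card K).symm)).1
      (LinearMap.ker_eq_bot.1 h.ker_evalPoints)
  obtain ⟨P, hP⟩ := hsurj (Pi.single i 1)
  have hPy (k : ι) : eval (y k) (P : MvPolynomial σ K) = if i = k then 1 else 0 := by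
    rw [← evalPoints_apply, hP, Pi.single_apply]
    simp only [eq_comm]
  have hPe : (P : MvPolynomial σ K) = e i := by
    rw [hrep P ((mem_restrictTotalDegree _ _ _).1 P.2)]
    simp only [hPy, ite_smul, one_smul, zero_smul, Finset.sum_ite_eq, Finset.mem_univ, if_true]
  rw [← hPe, hPy]

lemma sum_multichoose_range (n l : ℕ) :
    ∑ j ∈ Finset.range (l + 1), n.multichoose j = (n + 1).multichoose l := by
  induction l with
  | zero => simp
  | succ l ih => rw [Finset.sum_range_succ, ih, Nat.multichoose_succ_succ, add_comm]

lemma card_finsupp_degree_le (σ : Type*) [Fintype σ] (l : ℕ) :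
    Nat.card {k : σ →₀ ℕ // k.degree ≤ l} = (l + Fintype.card σ).choose l := by
  classical
  let S : Finset (σ →₀ ℕ) :=
    (Finset.range (l + 1)).biUnion fun j => Finset.finsuppAntidiag Finset.univ j
  have hS (k : σ →₀ ℕ) : k ∈ S ↔ k.degree ≤ l := by
    simp [S, Finset.mem_finsuppAntidiag, Finsupp.degree_eq_sum]
  have hdisj : (Finset.range (l + 1) : Set ℕ).PairwiseDisjoint
      fun j => Finset.finsuppAntidiag (Finset.univ : Finset σ) j := fun i _ j _ hij =>
    Finset.disjoint_left.2 fun k hi hj => hij <|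
      (Finset.mem_finsuppAntidiag.1 hi).1.symm.trans (Finset.mem_finsuppAntidiag.1 hj).1
  rw [Nat.card_congr (Equiv.subtypeEquivRight fun k => (hS k).symm), Nat.card_eq_fintype_card,
    Fintype.card_coe, Finset.card_biUnion hdisj]
  simp_rw [Finset.card_finsuppAntidiag_nat_eq_multichoose, Finset.card_univ]
  rw [sum_multichoose_range, Nat.multichoose_eq]
  congr 1
  omega

lemma finrank_restrictTotalDegree [Fintype σ] (l : ℕ) :
    Module.finrank K (restrictTotalDegree σ K l) = (l + Fintype.card σ).choose l := by
  rw [← card_finsupp_degree_le]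
  exact Module.finrank_eq_nat_card_basis
    (basisRestrictSupport K {k : σ →₀ ℕ | (k.sum fun _ e => e) ≤ l})

lemma exists_eval_eq_eval_add_smul {R : Type*} [CommSemiring R] [Nontrivial R]
    (Q : MvPolynomial σ R) (z : σ → R) (r : R) :
    ∃ P : MvPolynomial σ R, P.totalDegree ≤ Q.totalDegree ∧
      ∀ u, eval u P = eval (z + r • u) Q := by
  let f : σ → MvPolynomial σ R := fun t => C (z t) + C r * X t
  have hf (t : σ) : (f t).totalDegree ≤ 1 := by
    refine (totalDegree_add _ _).trans (max_le ((totalDegree_C _).trans_le zero_le_one) ?_)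
    refine (totalDegree_mul _ _).trans ?_
    rw [totalDegree_C, totalDegree_X]
  refine ⟨bind₁ f Q, ?_, fun u => ?_⟩
  · rw [bind₁, aeval_def, eval₂_eq]
    refine totalDegree_finsetSum_le fun k hk => (totalDegree_mul _ _).trans ?_
    rw [algebraMap_eq, totalDegree_C, zero_add]
    calc (∏ t ∈ k.support, f t ^ k t).totalDegree
        ≤ ∑ t ∈ k.support, (f t ^ k t).totalDegree := totalDegree_finsetProd _ _
      _ ≤ ∑ t ∈ k.support, k t := Finset.sum_le_sum fun t _ =>
          (totalDegree_pow _ _).trans ((Nat.mul_le_mul_left _ (hf t)).trans_eq (mul_one _))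
      _ ≤ Q.totalDegree := le_totalDegree hk
  · rw [eval, eval₂Hom_bind₁]
    congr 2
    ext t
    simp [f]

end Interpolation

section UnitCube

open MvPolynomial

open scoped ContDiff

lemma exists_isDetermining_unitCube (d n : ℕ) :
    ∃ y : (Fin d → Fin (n + 1)) → Fin d → ℝ, (∀ g, y g ∈ unitCube d) ∧ IsDetermining n y := by
  let c : Fin (n + 1) → ℝ := fun j => j / (n + 1)
  have hc : Function.Injective c := fun i j hij =>
    Fin.ext (Nat.cast_injective ((div_left_inj' (by positivity)).1 hij))
  refine ⟨fun g t => c (g t), fun g t => ⟨by positivity, ?_⟩, fun P hP h0 => ?_⟩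
  · exact div_le_one_of_le₀ (by exact_mod_cast (g t).2.le) (by positivity)
  · refine P.eq_zero_of_eval_zero_at_prod_finset (fun _ => Finset.univ.map ⟨c, hc⟩)
      (fun t => ?_) fun u hu => ?_
    · rw [Finset.card_map, Finset.card_univ, Fintype.card_fin]
      exact Nat.lt_succ_of_le ((P.degreeOf_le_totalDegree t).trans hP)
    · choose g hg using fun t => Finset.mem_map.1 (hu t)
      rw [show u = fun t => c (g t) from funext fun t => (hg t).2.symm]
      exact h0 g

variable {d : ℕ}

lemma abs_eval_smul_le {P : MvPolynomial (Fin d) ℝ} {n : ℕ} (hP : P.totalDegree ≤ n) {τ : ℝ}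
    (hτ : 1 ≤ τ) {u : Fin d → ℝ} (hu : u ∈ unitCube d) :
    |eval (τ • u) P| ≤ (∑ k ∈ P.support, |P.coeff k|) * τ ^ n := by
  rw [eval_eq, Finset.sum_mul]
  refine (Finset.abs_sum_le_sum_abs _ _).trans (Finset.sum_le_sum fun k hk => ?_)
  rw [abs_mul]
  refine mul_le_mul_of_nonneg_left ?_ (abs_nonneg _)
  calc |∏ t ∈ k.support, (τ • u) t ^ k t|
      ≤ ∏ t ∈ k.support, τ ^ k t := by
        rw [Finset.abs_prod]
        refine Finset.prod_le_prod (fun t _ => abs_nonneg _) fun t _ => ?_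
        rw [abs_pow, Pi.smul_apply, smul_eq_mul, abs_of_nonneg (mul_nonneg (by linarith) (hu t).1)]
        exact pow_le_pow_left₀ (mul_nonneg (by linarith) (hu t).1)
          (mul_le_of_le_one_right (by linarith) (hu t).2) _
    _ = τ ^ (k.sum fun _ j => j) := Finset.prod_pow_eq_pow_sum _ _ _
    _ ≤ τ ^ n := pow_le_pow_right₀ hτ ((le_totalDegree hk).trans hP)

lemma exists_abs_eval_smul_le (d n : ℕ) :
    ∃ C : ℝ, ∀ (P : MvPolynomial (Fin d) ℝ) (B : ℝ), P.totalDegree ≤ n →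
      (∀ u ∈ unitCube d, |eval u P| ≤ B) →
      ∀ τ : ℝ, 1 ≤ τ → ∀ u ∈ unitCube d, |eval (τ • u) P| ≤ C * B * τ ^ n := by
  obtain ⟨y, hy, hdet⟩ := exists_isDetermining_unitCube d n
  obtain ⟨e, hdeg, hrep⟩ := hdet.exists_interpolation
  refine ⟨∑ g, ∑ k ∈ (e g).support, |(e g).coeff k|, fun P B hP hB τ hτ u hu => ?_⟩
  rw [hrep P hP, map_sum, mul_assoc, Finset.sum_mul]
  refine (Finset.abs_sum_le_sum_abs _ _).trans (Finset.sum_le_sum fun g _ => ?_)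
  rw [smul_eval, abs_mul, mul_left_comm]
  exact mul_le_mul (hB _ (hy g)) (abs_eval_smul_le (hdeg g) hτ hu) (abs_nonneg _)
    ((abs_nonneg _).trans (hB _ (hy g)))

lemma exists_abs_eval_add_smul_le (d n : ℕ) :
    ∃ C : ℝ, ∀ (Q : MvPolynomial (Fin d) ℝ) (B : ℝ) (z : Fin d → ℝ) (s R : ℝ),
      Q.totalDegree ≤ n → 0 < s → s ≤ R → (∀ u ∈ cube d z s, |eval u Q| ≤ B) →
      ∀ u ∈ unitCube d, |eval (z + R • u) Q| ≤ C * B * (R / s) ^ n := by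
  obtain ⟨C, hC⟩ := exists_abs_eval_smul_le d n
  refine ⟨C, fun Q B z s R hQ hs hsR hB u hu => ?_⟩
  obtain ⟨P, hPdeg, hP⟩ := exists_eval_eq_eval_add_smul Q z s
  have hPB (v : Fin d → ℝ) (hv : v ∈ unitCube d) : |eval v P| ≤ B := by
    rw [hP]
    refine hB _ fun t => ?_
    simp only [Pi.add_apply, Pi.smul_apply, smul_eq_mul]
    constructor <;> nlinarith [hv t]
  have hPQ : eval ((R / s) • u) P = eval (z + R • u) Q := by
    rw [hP, smul_smul, mul_div_cancel₀ _ hs.ne']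
  exact hPQ ▸ hC P B (hPdeg.trans hQ) hPB _ ((one_le_div hs).2 hsR) u hu

lemma contDiff_eval (P : MvPolynomial (Fin d) ℝ) : ContDiff ℝ ∞ fun u => eval u P := by
  simp only [eval_eq]
  fun_prop

lemma isBounded_unitCube (d : ℕ) : Bornology.IsBounded (unitCube d) :=
  (Metric.isBounded_Icc (0 : Fin d → ℝ) 1).subset fun _ hu =>
    ⟨fun t => (hu t).1, fun t => (hu t).2⟩

lemma exists_sq_sum_mul_eval_le_energy {p : ℝ} (hp : (d : ℝ) / 2 < p) (n : ℕ) :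
    ∃ C : ℝ, 0 ≤ C ∧ ∀ {ι : Type*} [Fintype ι] (P : MvPolynomial (Fin d) ℝ) (B : ℝ)
      (y : ι → Fin d → ℝ) (b : ι → ℝ), P.totalDegree ≤ n → (∀ u ∈ unitCube d, |eval u P| ≤ B) →
      (∀ i, y i ∈ unitCube d) → (∑ i, b i * eval (y i) P) ^ 2 ≤ C * B ^ 2 * energy p y b := by
  obtain ⟨x, hx, hdet⟩ := exists_isDetermining_unitCube d n
  obtain ⟨e, -, hrep⟩ := hdet.exists_interpolation
  choose C hC hCe using fun g =>
    exists_sq_sum_mul_le_energy hp (contDiff_eval (e g)) (isBounded_unitCube d)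
  refine ⟨Fintype.card (Fin d → Fin (n + 1)) * ∑ g, C g,
    mul_nonneg (Nat.cast_nonneg _) (Finset.sum_nonneg fun g _ => hC g), ?_⟩
  intro ι _ P B y b hP hB hy
  have hsum : ∑ i, b i * eval (y i) P = ∑ g, eval (x g) P * ∑ i, b i * eval (y i) (e g) := by
    conv_lhs => rw [hrep P hP]
    simp only [map_sum, smul_eval, Finset.mul_sum, mul_left_comm (b _)]
    exact Finset.sum_comm
  have hP2 : ∑ g, eval (x g) P ^ 2 ≤ Fintype.card (Fin d → Fin (n + 1)) * B ^ 2 := by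
    rw [← nsmul_eq_mul, ← Finset.card_univ]
    exact Finset.sum_le_card_nsmul _ _ _ fun g _ => by
      rw [← sq_abs]
      exact pow_le_pow_left₀ (abs_nonneg _) (hB _ (hx g)) 2
  calc (∑ i, b i * eval (y i) P) ^ 2
      ≤ (∑ g, eval (x g) P ^ 2) * ∑ g, (∑ i, b i * eval (y i) (e g)) ^ 2 :=
        hsum ▸ Finset.sum_mul_sq_le_sq_mul_sq _ _ _
    _ ≤ (Fintype.card (Fin d → Fin (n + 1)) * B ^ 2) * ∑ g, C g * energy p y b := by
        gcongr with g
        exact hCe g y b hy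
    _ = _ := by rw [← Finset.sum_mul]; ring

/-- Rescaling the nodes by `R⁻¹` instead of `s⁻¹` costs the growth `(R / s) ^ n` of polynomials. -/
lemma exists_sq_sum_mul_eval_le_energy_inv_smul {p : ℝ} (hp : (d : ℝ) / 2 < p) (n : ℕ) :
    ∃ C : ℝ, 0 ≤ C ∧ ∀ {ι : Type*} [Fintype ι] (Q : MvPolynomial (Fin d) ℝ) (B : ℝ)
      (z : Fin d → ℝ) (s R : ℝ) (y : ι → Fin d → ℝ) (b : ι → ℝ), Q.totalDegree ≤ n → 0 < s →
      s ≤ R → (∀ u ∈ cube d z s, |eval u Q| ≤ B) → (∀ i, y i ∈ cube d z s) →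
      (∑ i, b i * eval (y i) Q) ^ 2 ≤ C * B ^ 2 * (R / s) ^ (2 * n) * energy p (R⁻¹ • y) b := by
  obtain ⟨C₁, hgrowth⟩ := exists_abs_eval_add_smul_le d n
  obtain ⟨C₂, hC₂, hmoment⟩ := exists_sq_sum_mul_eval_le_energy hp n
  refine ⟨C₂ * C₁ ^ 2, by positivity, ?_⟩
  intro ι _ Q B z s R y b hQ hs hsR hB hy
  have hR : 0 < R := hs.trans_le hsR
  obtain ⟨P, hPdeg, hP⟩ := exists_eval_eq_eval_add_smul Q z R
  let v : ι → Fin d → ℝ := fun i => (R⁻¹ • y) i + -(R⁻¹ • z)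
  have hPB (u : Fin d → ℝ) (hu : u ∈ unitCube d) : |eval u P| ≤ C₁ * B * (R / s) ^ n :=
    hP u ▸ hgrowth Q B z s R hQ hs hsR hB u hu
  have hv (i : ι) : z + R • v i = y i := by
    simp only [v, Pi.smul_apply, smul_add, smul_neg, smul_inv_smul₀ hR.ne']
    abel
  have hv_mem (i : ι) : v i ∈ unitCube d := fun t => by
    have hvt := congrFun (hv i) t
    simp only [Pi.add_apply, Pi.smul_apply, smul_eq_mul] at hvt
    have hyt := hy i t
    constructor <;> nlinarith
  calc (∑ i, b i * eval (y i) Q) ^ 2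
      = (∑ i, b i * eval (v i) P) ^ 2 := by simp only [hP, hv]
    _ ≤ C₂ * (C₁ * B * (R / s) ^ n) ^ 2 * energy p v b :=
        hmoment P _ v b (hPdeg.trans hQ) hPB hv_mem
    _ = C₂ * C₁ ^ 2 * B ^ 2 * (R / s) ^ (2 * n) * energy p (R⁻¹ • y) b := by
        rw [energy_add_const]
        ring

end UnitCube

section NormingSets

open MvPolynomial

variable {d l m : ℕ} {z x : Fin d → ℝ} {s c : ℝ} {w : Fin m → Fin d → ℝ}

lemma abs_sub_le_of_mem_cube {u v : Fin d → ℝ} (hu : u ∈ cube d z s) (hv : v ∈ cube d z s)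
    (t : Fin d) : |u t - v t| ≤ s := by
  rw [abs_le]
  constructor <;> linarith [hu t, hv t]

lemma IsNorming.isDetermining (hs : 0 < s)
    (h : IsNorming l (cube d z s) w c) : IsDetermining l w := by
  intro P hP h0
  refine funext_set (fun t => Set.Icc (z t) (z t + s))
    (fun t => Set.Icc_infinite (lt_add_of_pos_right _ hs)) fun u hu => ?_
  have hPu := h P hP u fun t => hu t trivial
  simp only [h0, abs_zero, Real.iSup_const_zero, mul_zero] at hPu
  rw [abs_nonpos_iff.1 hPu, map_zero]

lemma IsNorming.exists_lagrange (hm : m = (l + d).choose l) (hs : 0 < s) (hc : 0 ≤ c)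
    (h : IsNorming l (cube d z s) w c) :
    ∃ e : Fin m → MvPolynomial (Fin d) ℝ,
      (∀ i, (e i).totalDegree ≤ l) ∧
      (∀ i j, eval (w j) (e i) = if i = j then 1 else 0) ∧
      (∀ i, ∀ u ∈ cube d z s, |eval u (e i)| ≤ c) ∧
      ∀ P : MvPolynomial (Fin d) ℝ, P.totalDegree ≤ l → P = ∑ i, eval (w i) P • e i := by
  obtain ⟨e, hdeg, hval, hrep⟩ := (h.isDetermining hs).exists_lagrange (by
    rw [finrank_restrictTotalDegree, Fintype.card_fin, Fintype.card_fin, hm])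
  refine ⟨e, hdeg, hval, fun i u hu => (h _ (hdeg i) u hu).trans ?_, hrep⟩
  refine mul_le_of_le_one_right hc (Real.iSup_le (fun j => ?_) zero_le_one)
  rw [hval]
  split_ifs <;> simp

lemma exists_inv_card_le_abs_of_sum_eq_one {ι : Type*} [Fintype ι] {f : ι → ℝ}
    (h : ∑ i, f i = 1) : ∃ i, (Fintype.card ι : ℝ)⁻¹ ≤ |f i| := by
  have hne : (Finset.univ : Finset ι).Nonempty :=
    Finset.nonempty_of_sum_ne_zero (h.trans_ne one_ne_zero)
  obtain ⟨i, -, hi⟩ : ∃ i ∈ Finset.univ, (Fintype.card ι : ℝ)⁻¹ ≤ |f i| := by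
    refine Finset.exists_le_of_sum_le hne ?_
    rw [Finset.sum_const, Finset.card_univ, nsmul_eq_mul]
    calc _ ≤ |∑ i, f i| := by rw [h, abs_one]; exact mul_inv_le_one
      _ ≤ ∑ i, |f i| := Finset.abs_sum_le_sum_abs _ _
  exact ⟨i, hi⟩

/-- Some Lagrange polynomial is at least `1 / m` at `x`; multiply it by a linear factor vanishing at
its own node. -/
lemma IsNorming.exists_separating {δ : ℝ} (hm : m = (l + d).choose l) (hδ : 0 < δ) (hs : 0 < s)
    (hc : 0 ≤ c) (h : IsNorming l (cube d z s) w c) (hw : ∀ i, w i ∈ cube d z s)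
    (hsep : ∀ i, ∃ t, δ ≤ |w i t - x t|) :
    ∃ Q : MvPolynomial (Fin d) ℝ, Q.totalDegree ≤ l + 1 ∧ eval x Q = 1 ∧
      (∀ i, eval (w i) Q = 0) ∧ ∀ u ∈ cube d z s, |eval u Q| ≤ m / δ * (c * s) := by
  obtain ⟨e, hdeg, hval, hbound, hrep⟩ := h.exists_lagrange hm hs hc
  obtain ⟨i, hi⟩ : ∃ i, (m : ℝ)⁻¹ ≤ |eval x (e i)| := by
    have hsum := congrArg (eval x) (hrep 1 (by simp))
    simp only [map_one, one_smul, map_sum] at hsum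
    simpa only [Fintype.card_fin] using exists_inv_card_le_abs_of_sum_eq_one hsum.symm
  have hm0 : 0 < (m : ℝ) := Nat.cast_pos.2 i.pos
  obtain ⟨t, ht⟩ := hsep i
  set q := eval x (e i)
  set a := x t - w i t with ha
  have hq : 0 < |q| := (inv_pos.2 hm0).trans_le hi
  have hδa : δ ≤ |a| := abs_sub_comm (w i t) (x t) ▸ ht
  have ha0 : 0 < |a| := hδ.trans_le hδa
  let Q : MvPolynomial (Fin d) ℝ := C (q * a)⁻¹ * (e i * (X t - C (w i t)))
  have hQ (u : Fin d → ℝ) : eval u Q = (q * a)⁻¹ * (eval u (e i) * (u t - w i t)) := by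
    simp only [Q, map_mul, map_sub, eval_C, eval_X]
  refine ⟨Q, ?_, ?_, fun j => ?_, fun u hu => ?_⟩
  · refine (totalDegree_mul _ _).trans ?_
    rw [totalDegree_C, zero_add]
    refine (totalDegree_mul _ _).trans (add_le_add (hdeg i) ((totalDegree_sub _ _).trans ?_))
    rw [totalDegree_X, totalDegree_C, max_eq_left zero_le_one]
  · rw [hQ, ← ha]
    exact inv_mul_cancel₀ (mul_ne_zero (abs_pos.1 hq) (abs_pos.1 ha0))
  · rw [hQ, hval]
    split_ifs with hij
    · rw [hij, sub_self, mul_zero, mul_zero]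
    · rw [zero_mul, mul_zero]
  · have hinv : |(q * a)⁻¹| ≤ m / δ := by
      rw [abs_inv, abs_mul, mul_inv, div_eq_mul_inv]
      gcongr
      exact inv_le_of_inv_le₀ hm0 hi
    rw [hQ, abs_mul, abs_mul]
    gcongr
    · exact hbound i u hu
    · exact abs_sub_le_of_mem_cube hu (hw i) t

end NormingSets

section LowerBound

open MvPolynomial

lemma rpow_mul_one_add_sq_rpow_le {p t : ℝ} (hp : 1 / 2 ≤ p) (ht : 0 < t) :
    t ^ (2 * p) * (1 + t ^ 2) ^ (-(p + 1 / 2)) ≤ 6 * (2 * t / (1 + 2 * t) - t / (1 + t)) := by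
  have hpow : t ^ (2 * p) ≤ t * (1 + t ^ 2) ^ (p - 1 / 2) := calc
    t ^ (2 * p) = t * (t ^ 2) ^ (p - 1 / 2) := by
      rw [← Real.rpow_two, ← Real.rpow_mul ht.le, ← Real.rpow_one_add' ht.le (by linarith)]
      ring_nf
    _ ≤ t * (1 + t ^ 2) ^ (p - 1 / 2) := by
      gcongr
      linarith
  have htel : 2 * t / (1 + 2 * t) - t / (1 + t) = t / ((1 + 2 * t) * (1 + t)) := by
    field_simp
    ring
  calc t ^ (2 * p) * (1 + t ^ 2) ^ (-(p + 1 / 2))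
      ≤ t * (1 + t ^ 2) ^ (p - 1 / 2) * (1 + t ^ 2) ^ (-(p + 1 / 2)) := by gcongr
    _ = t / (1 + t ^ 2) := by
      rw [mul_assoc, ← Real.rpow_add (by positivity), show p - 1 / 2 + -(p + 1 / 2) = -1 by ring,
        Real.rpow_neg_one, div_eq_mul_inv]
    _ ≤ 6 * (t / ((1 + 2 * t) * (1 + t))) := by
      rw [← mul_div_assoc, div_le_div_iff₀ (by positivity) (by positivity)]
      nlinarith [sq_nonneg (t - 1), mul_pos ht ht, mul_nonneg ht.le (sq_nonneg (t - 1))]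
    _ = _ := by rw [htel]

lemma sum_dyadic_rpow_mul_one_add_sq_rpow_le {p r : ℝ} (hp : 1 / 2 ≤ p) (hr : 0 < r) (J : ℕ) :
    ∑ j ∈ Finset.range J, (2 ^ j * r) ^ (2 * p) * (1 + (2 ^ j * r) ^ 2) ^ (-(p + 1 / 2)) ≤ 6 := by
  let F : ℕ → ℝ := fun j => 2 ^ j * r / (1 + 2 ^ j * r)
  have hterm (j : ℕ) : (2 ^ j * r) ^ (2 * p) * (1 + (2 ^ j * r) ^ 2) ^ (-(p + 1 / 2)) ≤
      6 * (F (j + 1) - F j) := by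
    simp only [F, pow_succ' (2 : ℝ) j, mul_assoc]
    exact rpow_mul_one_add_sq_rpow_le hp (by positivity)
  have hF0 : 0 ≤ F 0 := by positivity
  have hFJ : F J ≤ 1 := div_le_one_of_le₀ (by linarith) (by positivity)
  refine (Finset.sum_le_sum fun j _ => hterm j).trans ?_
  rw [← Finset.mul_sum, Finset.sum_range_sub]
  linarith

variable {d : ℕ}

lemma rpow_mul_besselWeight_smul_le {p q c R : ℝ} (hq : 0 ≤ q) (hR : 0 < R) (hRc : R ≤ c)
    (ξ : Fin d → ℝ) :
    R ^ (2 * p) * besselWeight q (R • ξ) ≤ (1 + c ^ 2) ^ q * besselWeight p ξ *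
      ((R * √(1 + ∑ j, ξ j ^ 2)) ^ (2 * p) * (1 + (R * √(1 + ∑ j, ξ j ^ 2)) ^ 2) ^ (-q)) := by
  have hX := one_le_one_add_sum_sq ξ
  have hsum : ∑ j, (R • ξ) j ^ 2 = R ^ 2 * ∑ j, ξ j ^ 2 := by
    simp only [Pi.smul_apply, smul_eq_mul, mul_pow, Finset.mul_sum]
  rw [besselWeight, besselWeight, hsum]
  set S := ∑ j, ξ j ^ 2
  have hRc2 : R ^ 2 ≤ c ^ 2 := by gcongr
  have hRS : 0 ≤ R ^ 2 * S := mul_nonneg (sq_nonneg R) (by linarith)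
  have hcancel : (1 + S) ^ (-p) * (R * √(1 + S)) ^ (2 * p) = R ^ (2 * p) := by
    rw [Real.mul_rpow hR.le (Real.sqrt_nonneg _), Real.rpow_mul (Real.sqrt_nonneg _),
      Real.rpow_two, Real.sq_sqrt (by linarith), mul_left_comm, ← Real.rpow_add (by linarith),
      neg_add_cancel, Real.rpow_zero, mul_one]
  have hbase : (1 + R ^ 2 * S) ^ (-q) ≤
      (1 + c ^ 2) ^ q * (1 + (R * √(1 + S)) ^ 2) ^ (-q) := by
    rw [mul_pow, Real.sq_sqrt (by linarith), Real.rpow_neg (by positivity),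
      Real.rpow_neg (by positivity), ← div_eq_mul_inv, inv_eq_one_div,
      div_le_div_iff₀ (by positivity) (by positivity), one_mul,
      ← Real.mul_rpow (by positivity) (by positivity)]
    refine Real.rpow_le_rpow (by positivity) ?_ hq
    nlinarith [mul_nonneg (sq_nonneg c) hRS]
  calc R ^ (2 * p) * (1 + R ^ 2 * S) ^ (-q)
      ≤ R ^ (2 * p) * ((1 + c ^ 2) ^ q * (1 + (R * √(1 + S)) ^ 2) ^ (-q)) := by gcongr
    _ = _ := by rw [← hcancel]; ring

lemma sum_dyadic_besselWeight_le {p c ℓ : ℝ} (hp : 1 / 2 ≤ p) (hℓ : 0 < ℓ) (J : ℕ)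
    (hJ : ∀ j < J, 2 ^ j * ℓ ≤ c) (ξ : Fin d → ℝ) :
    ∑ j ∈ Finset.range J, (2 ^ j * ℓ) ^ (2 * p) * besselWeight (p + 1 / 2) ((2 ^ j * ℓ) • ξ) ≤
      6 * (1 + c ^ 2) ^ (p + 1 / 2) * besselWeight p ξ := by
  have hr : 0 < √(1 + ∑ j, ξ j ^ 2) :=
    Real.sqrt_pos.2 (zero_lt_one.trans_le (one_le_one_add_sum_sq ξ))
  refine (Finset.sum_le_sum fun j hj => rpow_mul_besselWeight_smul_le (by linarith)
    (by positivity) (hJ j (Finset.mem_range.1 hj)) ξ).trans ?_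
  rw [← Finset.mul_sum, mul_assoc 6, mul_comm 6]
  refine mul_le_mul_of_nonneg_left ?_ (mul_nonneg (by positivity) (besselWeight_nonneg _ _))
  simp only [mul_assoc _ ℓ]
  exact sum_dyadic_rpow_mul_one_add_sq_rpow_le hp (mul_pos hℓ hr) J

/-- Each frequency is seen by essentially one dyadic scale. -/
lemma sum_dyadic_energy_le {ι : Type*} [Fintype ι] {p c ℓ : ℝ} (hp : 1 / 2 ≤ p)
    (hdp : (d : ℝ) / 2 < p) (hℓ : 0 < ℓ) (J : ℕ) (hJ : ∀ j < J, 2 ^ j * ℓ ≤ c)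
    (y : ι → Fin d → ℝ) (b : ι → ℝ) :
    ∑ j ∈ Finset.range J,
        (2 ^ j * ℓ) ^ (2 * p - d) * energy (p + 1 / 2) ((2 ^ j * ℓ)⁻¹ • y) b ≤
      6 * (1 + c ^ 2) ^ (p + 1 / 2) * energy p y b := by
  have hint (j : ℕ) : Integrable fun ξ : Fin d → ℝ => (2 ^ j * ℓ) ^ (2 * p) *
      (‖expSum y b ξ‖ ^ 2 * besselWeight (p + 1 / 2) ((2 ^ j * ℓ) • ξ)) :=
    (integrable_norm_expSum_pow_mul y b 2 ((integrable_besselWeight (by linarith)).comp_smul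
      (by positivity))).const_mul _
  calc ∑ j ∈ Finset.range J,
        (2 ^ j * ℓ) ^ (2 * p - d) * energy (p + 1 / 2) ((2 ^ j * ℓ)⁻¹ • y) b
      = ∫ ξ, ∑ j ∈ Finset.range J, (2 ^ j * ℓ) ^ (2 * p) *
          (‖expSum y b ξ‖ ^ 2 * besselWeight (p + 1 / 2) ((2 ^ j * ℓ) • ξ)) := by
        rw [integral_finsetSum _ fun j _ => hint j]
        refine Finset.sum_congr rfl fun j _ => ?_
        have hR : 0 < 2 ^ j * ℓ := by positivity
        rw [energy_inv_smul hR, integral_const_mul, ← mul_assoc, ← Real.rpow_natCast _ d,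
          ← Real.rpow_add hR, sub_add_cancel]
    _ ≤ ∫ ξ, 6 * (1 + c ^ 2) ^ (p + 1 / 2) * (‖expSum y b ξ‖ ^ 2 * besselWeight p ξ) := by
        refine integral_mono (integrable_finsetSum _ fun j _ => hint j)
          ((integrable_norm_expSum_pow_mul y b 2 (integrable_besselWeight hdp)).const_mul _)
          fun ξ => ?_
        have hξ := mul_le_mul_of_nonneg_left (sum_dyadic_besselWeight_le hp hℓ J hJ ξ)
          (sq_nonneg ‖expSum y b ξ‖)
        simpa only [Finset.mul_sum, mul_left_comm (‖expSum y b ξ‖ ^ 2)] using hξ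
    _ = _ := integral_const_mul _ _

lemma exists_sq_sum_mul_eval_mul_sum_dyadic_le {α : ℝ} (hα : 0 < α) (hd : 1 ≤ d) (n : ℕ) (c : ℝ) :
    ∃ C : ℝ, 0 ≤ C ∧ ∀ {ι : Type*} [Fintype ι] (Q : MvPolynomial (Fin d) ℝ) (B : ℝ)
      (z : Fin d → ℝ) (s : ℝ) (y : ι → Fin d → ℝ) (b : ι → ℝ) (J : ℕ), Q.totalDegree ≤ n →
      0 < s → (∀ j < J, 2 ^ j * s ≤ c) → (∀ u ∈ cube d z s, |eval u Q| ≤ B) →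
      (∀ i, y i ∈ cube d z s) →
      (∑ i, b i * eval (y i) Q) ^ 2 *
          (s ^ (2 * α) * ∑ j ∈ Finset.range J, ((2 : ℝ) ^ j) ^ (2 * (α - n))) ≤
        C * B ^ 2 * energy (α + (d : ℝ) / 2) y b := by
  have hd' : (1 : ℝ) ≤ d := by exact_mod_cast hd
  set p := α + (d : ℝ) / 2 with hp
  obtain ⟨C, hC, hmoment⟩ :=
    exists_sq_sum_mul_eval_le_energy_inv_smul (d := d) (p := p + 1 / 2) (by linarith) n
  refine ⟨C * (6 * (1 + c ^ 2) ^ (p + 1 / 2)), by positivity, ?_⟩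
  intro ι _ Q B z s y b J hQ hs hJ hB hy
  have hterm (j : ℕ) : (∑ i, b i * eval (y i) Q) ^ 2 *
      (s ^ (2 * α) * ((2 : ℝ) ^ j) ^ (2 * (α - n))) ≤
      C * B ^ 2 * ((2 ^ j * s) ^ (2 * p - d) * energy (p + 1 / 2) ((2 ^ j * s)⁻¹ • y) b) := by
    have hR : s ≤ 2 ^ j * s := le_mul_of_one_le_left hs.le (one_le_pow₀ one_le_two)
    have hsplit : ((2 : ℝ) ^ j) ^ (2 * (α - n)) =
        ((2 : ℝ) ^ j) ^ (2 * α) * (((2 : ℝ) ^ j) ^ (2 * n))⁻¹ := by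
      rw [← Real.rpow_natCast _ (2 * n), ← Real.rpow_neg (by positivity),
        ← Real.rpow_add (by positivity)]
      push_cast
      ring_nf
    have hm := hmoment Q B z s (2 ^ j * s) y b hQ hs hR hB hy
    rw [mul_div_cancel_right₀ _ hs.ne'] at hm
    calc _ ≤ _ := mul_le_mul_of_nonneg_right hm (by positivity)
      _ = _ := by
        rw [hsplit, show 2 * p - d = 2 * α by rw [hp]; ring,
          Real.mul_rpow (by positivity) hs.le]
        field_simp
  calc _ = ∑ j ∈ Finset.range J, (∑ i, b i * eval (y i) Q) ^ 2 *
        (s ^ (2 * α) * ((2 : ℝ) ^ j) ^ (2 * (α - n))) := by rw [← Finset.mul_sum, ← Finset.mul_sum]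
    _ ≤ C * B ^ 2 * ∑ j ∈ Finset.range J,
        (2 ^ j * s) ^ (2 * p - d) * energy (p + 1 / 2) ((2 ^ j * s)⁻¹ • y) b := by
      rw [Finset.mul_sum]
      exact Finset.sum_le_sum fun j _ => hterm j
    _ ≤ C * B ^ 2 * (6 * (1 + c ^ 2) ^ (p + 1 / 2) * energy p y b) := by
      gcongr
      exact sum_dyadic_energy_le (by linarith) (by linarith) hs J hJ y b
    _ = _ := by ring

open Classical in
/-- The factor `Λ` of the theorem: `ln (1 / L)` for integer regularity, `1` otherwise. -/
def logFactor (α L : ℝ) : ℝ := if IsNatVal α then Real.log (1 / L) else 1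

lemma logFactor_nonneg (α : ℝ) {L : ℝ} (hL : 0 < L) (hL1 : L ≤ 1) : 0 ≤ logFactor α L := by
  rw [logFactor]
  split_ifs
  · exact Real.log_nonneg ((one_le_div hL).2 hL1)
  · exact zero_le_one

lemma lbelow_add_one {α : ℝ} (hα : 0 < α) : lbelow α + 1 = ⌈α⌉₊ :=
  Nat.sub_add_cancel (Nat.ceil_pos.2 hα)

lemma IsNatVal.natCast_ceil_eq {α : ℝ} (h : IsNatVal α) : (⌈α⌉₊ : ℝ) = α := by
  obtain ⟨n, rfl⟩ := h
  rw [Nat.ceil_natCast]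

lemma exists_dyadic_count {L : ℝ} (hL : 0 < L) (hL2 : L ≤ 1 / 2) :
    ∃ J : ℕ, 0 < J ∧ Real.log (1 / L) ≤ J ∧ ∀ j < J, 2 ^ j * L ≤ 1 := by
  have hlog : 0 < Real.log (1 / L) := Real.log_pos ((one_lt_div hL).2 (by linarith))
  have hlogb : Real.log (1 / L) ≤ Real.logb 2 (1 / L) := by
    rw [Real.logb, le_div_iff₀ (Real.log_pos one_lt_two)]
    exact mul_le_of_le_one_right hlog.le (by linarith [Real.log_two_lt_d9])
  refine ⟨⌈Real.logb 2 (1 / L)⌉₊, Nat.ceil_pos.2 (hlog.trans_le hlogb),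
    hlogb.trans (Nat.le_ceil _), fun j hj => ?_⟩
  have h := (Real.lt_logb_iff_rpow_lt one_lt_two (by positivity)).1 (Nat.lt_ceil.1 hj)
  rw [Real.rpow_natCast, lt_div_iff₀ hL] at h
  exact h.le

/-- For integer `α` every dyadic scale between `L` and `1` contributes `1`, otherwise the first
scale suffices. -/
lemma exists_logFactor_le_sum_dyadic (α : ℝ) {L : ℝ} (hL : 0 < L) (hL2 : L ≤ 1 / 2) :
    ∃ J : ℕ, (∀ j < J, 2 ^ j * L ≤ 1) ∧
      logFactor α L ≤ ∑ j ∈ Finset.range J, ((2 : ℝ) ^ j) ^ (2 * (α - ⌈α⌉₊)) := by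
  obtain ⟨J, hJ0, hlog, hJ⟩ := exists_dyadic_count hL hL2
  refine ⟨J, hJ, ?_⟩
  by_cases h : IsNatVal α
  · simpa [logFactor, h, h.natCast_ceil_eq] using hlog
  · rw [logFactor, if_neg h]
    refine le_trans (le_of_eq ?_) (Finset.single_le_sum (fun j _ => by positivity)
      (Finset.mem_range.2 hJ0))
    rw [pow_zero, Real.one_rpow]

lemma GeomHyp.exists_cube {α cL cd cN L : ℝ} {m : ℕ}
    (hm : m = (lbelow α + d).choose (lbelow α)) {w : Fin m → Fin d → ℝ} {x : Fin d → ℝ}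
    (h : GeomHyp α d cL cd cN L w x) :
    ∃ (z : Fin d → ℝ) (s : ℝ), cd * L ≤ s ∧ s ≤ cL * L ∧ (∀ i, w i ∈ cube d z s) ∧
      x ∈ cube d z s ∧ (∀ i, ∃ t, cd * L ≤ |w i t - x t|) ∧
      IsNorming (lbelow α) (cube d z s) w cN := by
  obtain ⟨z, s, -, hsL, hw, hx, -, hsep, hnorm⟩ := h
  obtain ⟨t, ht⟩ := hsep ⟨0, hm ▸ Nat.choose_pos (Nat.le_add_right _ _)⟩
  exact ⟨z, s, ht.trans (abs_sub_le_of_mem_cube (hw _) hx t), hsL, hw, hx, hsep, hnorm⟩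

lemma GeomHyp.exists_separating {α : ℝ} (hα : 0 < α) {cL cd cN L : ℝ} (hcd : 0 < cd) (hcN : 0 ≤ cN)
    (hL : 0 < L) {m : ℕ} (hm : m = (lbelow α + d).choose (lbelow α)) {w : Fin m → Fin d → ℝ}
    {x : Fin d → ℝ} (h : GeomHyp α d cL cd cN L w x) :
    ∃ (z : Fin d → ℝ) (s : ℝ) (Q : MvPolynomial (Fin d) ℝ), cd * L ≤ s ∧ s ≤ cL * L ∧
      (∀ i, w i ∈ cube d z s) ∧ x ∈ cube d z s ∧ Q.totalDegree ≤ ⌈α⌉₊ ∧ eval x Q = 1 ∧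
      (∀ i, eval (w i) Q = 0) ∧ ∀ u ∈ cube d z s, |eval u Q| ≤ m / cd * (cN * cL) := by
  obtain ⟨z, s, hsd, hsL, hw, hx, hsep, hnorm⟩ := h.exists_cube hm
  have hcdL : 0 < cd * L := mul_pos hcd hL
  obtain ⟨Q, hQdeg, hQx, hQw, hQB⟩ :=
    hnorm.exists_separating hm hcdL (hcdL.trans_le hsd) hcN hw hsep
  refine ⟨z, s, Q, hsd, hsL, hw, hx, lbelow_add_one hα ▸ hQdeg, hQx, hQw,
    fun u hu => (hQB u hu).trans ?_⟩
  calc m / (cd * L) * (cN * s) ≤ m / (cd * L) * (cN * (cL * L)) := by gcongr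
    _ = m / cd * (cN * cL) := by field_simp

lemma exists_mul_le_predictionError {α : ℝ} (hα : 0 < α) (hd : 1 ≤ d) {cL cd cN : ℝ}
    (hcL : 0 ≤ cL) (hcd : 0 < cd) (hcN : 0 ≤ cN) {m : ℕ}
    (hm : m = (lbelow α + d).choose (lbelow α)) :
    ∃ c : ℝ, 0 < c ∧ ∀ (L : ℝ) (x : Fin d → ℝ) (w : Fin m → Fin d → ℝ), 0 < L → L ≤ 1 / 2 →
      GeomHyp α d cL cd cN L w x → ∀ a : Fin m → ℝ,
      c * (L ^ (2 * α) * logFactor α L) ≤ predictionError α w x a := by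
  obtain ⟨C, hC, hle⟩ := exists_sq_sum_mul_eval_mul_sum_dyadic_le hα hd ⌈α⌉₊ cL
  set B := m / cd * (cN * cL)
  refine ⟨cd ^ (2 * α) / (C * B ^ 2 + 1), by positivity, fun L x w hL hL2 h a => ?_⟩
  obtain ⟨z, s, Q, hsd, hsL, hw, hx, hQdeg, hQx, hQw, hQB⟩ := h.exists_separating hα hcd hcN hL hm
  obtain ⟨J, hJ, hlog⟩ := exists_logFactor_le_sum_dyadic α hL hL2
  have hs : 0 < s := (mul_pos hcd hL).trans_le hsd
  have hJs (j : ℕ) (hj : j < J) : 2 ^ j * s ≤ cL := by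
    nlinarith [hJ j hj, mul_le_mul_of_nonneg_left hsL (pow_nonneg zero_le_two j)]
  have hE := hle Q B z s (fun o : Option (Fin m) => o.elim x w) (fun o => o.elim 1 (-a)) J hQdeg
    hs hJs hQB (by rintro (_ | i) <;> [exact hx; exact hw i])
  simp only [Fintype.sum_option, Option.elim_none, Option.elim_some, hQx, hQw, mul_zero,
    Finset.sum_const_zero, add_zero, mul_one, one_pow, one_mul] at hE
  have hE0 : 0 ≤ predictionError α w x a := energy_nonneg _ _ _
  have hlog0 := logFactor_nonneg α hL (by linarith)
  rw [div_mul_eq_mul_div, div_le_iff₀ (by positivity)]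
  calc cd ^ (2 * α) * (L ^ (2 * α) * logFactor α L)
      = (cd * L) ^ (2 * α) * logFactor α L := by rw [Real.mul_rpow hcd.le hL.le, mul_assoc]
    _ ≤ s ^ (2 * α) * ∑ j ∈ Finset.range J, ((2 : ℝ) ^ j) ^ (2 * (α - ⌈α⌉₊)) := by gcongr
    _ ≤ C * B ^ 2 * predictionError α w x a := hE
    _ ≤ predictionError α w x a * (C * B ^ 2 + 1) := by linarith

end LowerBound

section VanishingMoments

open MvPolynomial

variable {ι : Type*} [Fintype ι] {d l : ℕ}

/-- The functional `f ↦ ∑ i, b i * f (y i)` annihilates the polynomials of degree at most `l`. -/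
def HasVanishingMoments (l : ℕ) (y : ι → Fin d → ℝ) (b : ι → ℝ) : Prop :=
  ∀ P : MvPolynomial (Fin d) ℝ, P.totalDegree ≤ l → ∑ i, b i * eval (y i) P = 0

lemma HasVanishingMoments.sum_mul_dotProduct_pow {y : ι → Fin d → ℝ} {b : ι → ℝ}
    (h : HasVanishingMoments l y b) (x ξ : Fin d → ℝ) {k : ℕ} (hk : k ≤ l) :
    ∑ i, b i * ((y i - x) ⬝ᵥ ξ) ^ k = 0 := by
  have hdeg : (∑ t, (X t - C (x t)) * C (ξ t) : MvPolynomial (Fin d) ℝ).totalDegree ≤ 1 := by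
    refine totalDegree_finsetSum_le fun t _ => (totalDegree_mul _ _).trans ?_
    rw [totalDegree_C, add_zero]
    exact (totalDegree_sub_C_le _ _).trans (totalDegree_X t).le
  have h0 := h ((∑ t, (X t - C (x t)) * C (ξ t)) ^ k)
    ((totalDegree_pow _ _).trans ((Nat.mul_le_mul_left k hdeg).trans (by rwa [mul_one])))
  simpa only [map_pow, map_sum, map_mul, map_sub, eval_X, eval_C, dotProduct, Pi.sub_apply]
    using h0

lemma norm_sum_mul_exp_le_of_sum_mul_pow_eq_zero {b θ : ι → ℝ} {r : ℝ} (hθ : ∀ i, |θ i| ≤ r)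
    (hr : r ≤ 1) (h : ∀ k ≤ l, ∑ i, b i * θ i ^ k = 0) :
    ‖∑ i, (b i : ℂ) * Complex.exp (θ i * Complex.I)‖ ≤ 3 * (∑ i, |b i|) * r ^ (l + 1) := by
  set T : ℂ → ℂ := fun z => ∑ k ∈ Finset.range (l + 1), z ^ k / (k.factorial : ℂ) with hT
  have hTsum : ∑ i, (b i : ℂ) * T (θ i * Complex.I) = 0 := by
    simp only [hT, Finset.mul_sum]
    rw [Finset.sum_comm]
    refine Finset.sum_eq_zero fun k hk => ?_
    have hk0 : ∑ i, (b i : ℂ) * (θ i : ℂ) ^ k = 0 := by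
      exact_mod_cast h k (Finset.mem_range_succ_iff.1 hk)
    calc _ = (∑ i, (b i : ℂ) * (θ i : ℂ) ^ k) * (Complex.I ^ k / (k.factorial : ℂ)) := by
          rw [Finset.sum_mul]
          exact Finset.sum_congr rfl fun i _ => by ring
      _ = 0 := by rw [hk0, zero_mul]
  have hremainder (i : ι) : ‖Complex.exp (θ i * Complex.I) - T (θ i * Complex.I)‖ ≤
      r ^ (l + 1) * 3 := by
    refine (Complex.norm_exp_sub_sum_le_norm_mul_exp _ _).trans ?_
    rw [norm_mul, Complex.norm_I, mul_one, Complex.norm_real, Real.norm_eq_abs]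
    have he : Real.exp |θ i| ≤ 3 :=
      (Real.exp_le_exp.2 ((hθ i).trans hr)).trans (by linarith [Real.exp_one_lt_d9])
    have hr0 : 0 ≤ r := (abs_nonneg _).trans (hθ i)
    gcongr
    exact hθ i
  calc ‖∑ i, (b i : ℂ) * Complex.exp (θ i * Complex.I)‖
      = ‖∑ i, (b i : ℂ) * (Complex.exp (θ i * Complex.I) - T (θ i * Complex.I))‖ := by
        simp only [mul_sub, Finset.sum_sub_distrib, hTsum, sub_zero]
    _ ≤ ∑ i, |b i| * (r ^ (l + 1) * 3) := by
        refine norm_sum_le_of_le _ fun i _ => ?_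
        rw [norm_mul, Complex.norm_real, Real.norm_eq_abs]
        exact mul_le_mul_of_nonneg_left (hremainder i) (abs_nonneg _)
    _ = _ := by
        rw [← Finset.sum_mul]
        ring

lemma abs_dotProduct_le {v : Fin d → ℝ} {r : ℝ} (hv : ∀ t, |v t| ≤ r) (ξ : Fin d → ℝ) :
    |v ⬝ᵥ ξ| ≤ d * r * ‖ξ‖ := by
  calc |v ⬝ᵥ ξ| ≤ ∑ t, |v t * ξ t| := Finset.abs_sum_le_sum_abs _ _
    _ ≤ ∑ _t : Fin d, r * ‖ξ‖ := Finset.sum_le_sum fun t _ => by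
        rw [abs_mul]
        exact mul_le_mul (hv t) (norm_le_pi_norm ξ t) (abs_nonneg _) ((abs_nonneg _).trans (hv t))
    _ = d * r * ‖ξ‖ := by
        rw [Finset.sum_const, Finset.card_fin, nsmul_eq_mul, mul_assoc]

lemma HasVanishingMoments.norm_expSum_le {y : ι → Fin d → ℝ} {b : ι → ℝ}
    (h : HasVanishingMoments l y b) {x : Fin d → ℝ} {r : ℝ}
    (hy : ∀ i t, |y i t - x t| ≤ r) (ξ : Fin d → ℝ) :
    ‖expSum y b ξ‖ ≤ 3 * (∑ i, |b i|) * (d * r * ‖ξ‖) ^ (l + 1) := by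
  have hb : 0 ≤ ∑ i, |b i| := Finset.sum_nonneg fun _ _ => abs_nonneg _
  rcases le_total (d * r * ‖ξ‖) 1 with hr1 | hr1
  · rw [← norm_expSum_add_const y (-x)]
    exact norm_sum_mul_exp_le_of_sum_mul_pow_eq_zero (fun i => abs_dotProduct_le (hy i) ξ) hr1
      fun k hk => h.sum_mul_dotProduct_pow x ξ hk
  · refine (_root_.norm_expSum_le y b ξ).trans ?_
    nlinarith [mul_le_mul_of_nonneg_left (one_le_pow₀ hr1 (n := l + 1)) hb]

lemma HasVanishingMoments.norm_expSum_sq_le {y : ι → Fin d → ℝ} {b : ι → ℝ}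
    (h : HasVanishingMoments l y b) {x : Fin d → ℝ} {c L : ℝ} (hc : 0 ≤ c) (hL : 0 ≤ L)
    (hy : ∀ i t, |y i t - x t| ≤ c * L) (ξ : Fin d → ℝ) :
    ‖expSum y b ξ‖ ^ 2 ≤ (3 * (∑ i, |b i|) * max 1 (d * c) ^ (l + 1)) ^ 2 *
      min 1 ((L * ‖ξ‖) ^ (2 * (l + 1))) := by
  have hb : 0 ≤ ∑ i, |b i| := Finset.sum_nonneg fun _ _ => abs_nonneg _
  rw [mul_min_of_nonneg _ _ (sq_nonneg _), mul_one, mul_comm 2, pow_mul, ← mul_pow]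
  refine le_min (pow_le_pow_left₀ (norm_nonneg _) ?_ 2) (pow_le_pow_left₀ (norm_nonneg _) ?_ 2)
  · have h1 : 1 ≤ max 1 (d * c) ^ (l + 1) := one_le_pow₀ (le_max_left _ _)
    nlinarith [_root_.norm_expSum_le y b ξ, mul_le_mul_of_nonneg_left h1 hb]
  · calc ‖expSum y b ξ‖ ≤ 3 * (∑ i, |b i|) * (d * (c * L) * ‖ξ‖) ^ (l + 1) :=
          h.norm_expSum_le hy ξ
      _ = 3 * (∑ i, |b i|) * (d * c) ^ (l + 1) * (L * ‖ξ‖) ^ (l + 1) := by ring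
      _ ≤ _ := by
          gcongr
          exact le_max_right _ _

end VanishingMoments

section RadialMajorant

variable {α : ℝ} {d n : ℕ} {L : ℝ}

/-- Up to a constant, the radial majorant of the spectral density of a functional at scale `L` with
`n` vanishing moments. -/
def radialMajorant (α : ℝ) (d n : ℕ) (L r : ℝ) : ℝ :=
  min 1 ((L * r) ^ (2 * n)) * (1 + r ^ 2) ^ (-(α + (d : ℝ) / 2))

lemma radialMajorant_nonneg (α : ℝ) (d n : ℕ) (L r : ℝ) : 0 ≤ radialMajorant α d n L r :=
  mul_nonneg (le_min zero_le_one (by rw [pow_mul]; positivity)) (by positivity)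

lemma continuous_radialMajorant (α : ℝ) (d n : ℕ) (L : ℝ) :
    Continuous (radialMajorant α d n L) := by
  unfold radialMajorant
  exact Continuous.mul (by fun_prop)
    (Continuous.rpow_const (by fun_prop) fun r => Or.inl (by positivity))

lemma integrable_radialMajorant_norm (hα : 0 < α) (n : ℕ) (L : ℝ) :
    Integrable fun ξ : Fin d → ℝ => radialMajorant α d n L ‖ξ‖ := by
  have h := integrable_rpow_neg_one_add_norm_sq (E := Fin d → ℝ) (μ := volume)
    (r := 2 * (α + (d : ℝ) / 2)) (by rw [Module.finrank_fin_fun]; linarith)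
  refine h.mono' ((continuous_radialMajorant α d n L).comp continuous_norm).aestronglyMeasurable
    (.of_forall fun ξ => ?_)
  rw [Real.norm_eq_abs, abs_of_nonneg (radialMajorant_nonneg _ _ _ _ _), radialMajorant,
    neg_div, mul_div_cancel_left₀ _ two_ne_zero]
  exact mul_le_of_le_one_left (by positivity) (min_le_left _ _)

lemma integrableOn_pow_mul_radialMajorant (hα : 0 < α) (hd : 1 ≤ d) (n : ℕ) (L : ℝ) :
    IntegrableOn (fun r => r ^ (d - 1) * radialMajorant α d n L r) (Set.Ioi 0) := by
  have : Nonempty (Fin d) := ⟨⟨0, hd⟩⟩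
  have h := (integrable_fun_norm_addHaar (volume : Measure (Fin d → ℝ))
    (f := radialMajorant α d n L)).1 (integrable_radialMajorant_norm hα n L)
  simpa only [Module.finrank_fin_fun, smul_eq_mul] using h

lemma radialMajorant_le_pow (hα : 0 < α) (hL : 0 ≤ L) {r : ℝ} (hr : 0 ≤ r) (hr1 : r ≤ 1) :
    radialMajorant α d n L r ≤ L ^ (2 * n) := by
  have hweight : (1 + r ^ 2) ^ (-(α + (d : ℝ) / 2)) ≤ 1 :=
    Real.rpow_le_one_of_one_le_of_nonpos (le_add_of_nonneg_right (sq_nonneg r))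
      (neg_nonpos.2 (by positivity))
  calc radialMajorant α d n L r ≤ (L * 1) ^ (2 * n) * 1 := by
        unfold radialMajorant
        gcongr
        exact (min_le_right _ _).trans (by gcongr)
    _ = L ^ (2 * n) := by rw [mul_one, mul_one]

lemma pow_mul_one_add_sq_rpow_le (hα : 0 < α) (hd : 1 ≤ d) {r : ℝ} (hr : 0 < r) :
    r ^ (d - 1) * (1 + r ^ 2) ^ (-(α + (d : ℝ) / 2)) ≤ r ^ (-2 * α - 1) := by
  calc r ^ (d - 1) * (1 + r ^ 2) ^ (-(α + (d : ℝ) / 2))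
      ≤ r ^ (d - 1) * (r ^ 2) ^ (-(α + (d : ℝ) / 2)) := by
        refine mul_le_mul_of_nonneg_left ?_ (by positivity)
        exact Real.rpow_le_rpow_of_nonpos (by positivity) (by linarith)
          (neg_nonpos.2 (by positivity))
    _ = r ^ (-2 * α - 1) := by
        rw [← Real.rpow_natCast r 2, ← Real.rpow_mul hr.le, ← Real.rpow_natCast r (d - 1),
          ← Real.rpow_add hr]
        congr 1
        push_cast [hd]
        ring

lemma pow_mul_radialMajorant_le (hα : 0 < α) (hd : 1 ≤ d) (n : ℕ) (L : ℝ) {r : ℝ} (hr : 0 < r) :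
    r ^ (d - 1) * radialMajorant α d n L r ≤ min 1 ((L * r) ^ (2 * n)) * r ^ (-2 * α - 1) := by
  rw [radialMajorant, mul_left_comm]
  refine mul_le_mul_of_nonneg_left (pow_mul_one_add_sq_rpow_le hα hd hr) ?_
  exact le_min zero_le_one (by rw [pow_mul]; positivity)

lemma integral_Ioc_zero_one_radialMajorant_le (hα : 0 < α) (hd : 1 ≤ d) (n : ℕ) (hL : 0 ≤ L) :
    ∫ r in Set.Ioc 0 1, r ^ (d - 1) * radialMajorant α d n L r ≤ L ^ (2 * n) := by
  have h := setIntegral_mono_on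
    ((integrableOn_pow_mul_radialMajorant hα hd n L).mono_set
      (Set.Ioc_subset_Ioi_self : Set.Ioc (0 : ℝ) 1 ⊆ _))
    (integrableOn_const (C := L ^ (2 * n)) (by simp)) measurableSet_Ioc fun r hr =>
      (mul_le_of_le_one_left (radialMajorant_nonneg _ _ _ _ _) (pow_le_one₀ hr.1.le hr.2)).trans
        (radialMajorant_le_pow hα hL hr.1.le hr.2)
  simpa using h

lemma integral_Ioc_one_radialMajorant_le (hα : 0 < α) (hd : 1 ≤ d) (n : ℕ) (L : ℝ) {R : ℝ}
    (hR : 1 ≤ R) :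
    ∫ r in Set.Ioc 1 R, r ^ (d - 1) * radialMajorant α d n L r ≤
      L ^ (2 * n) * ∫ r in (1 : ℝ)..R, r ^ (2 * (n - α) - 1) := by
  have hint : IntervalIntegrable (fun r : ℝ => r ^ (2 * (n - α) - 1)) volume 1 R :=
    intervalIntegral.intervalIntegrable_rpow (Or.inr (by
      rw [Set.uIcc_of_le hR]
      exact fun h => by linarith [h.1]))
  rw [intervalIntegral.integral_of_le hR, ← integral_const_mul]
  refine setIntegral_mono_on
    ((integrableOn_pow_mul_radialMajorant hα hd n L).mono_set fun r hr => zero_lt_one.trans hr.1)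
    (((intervalIntegrable_iff_integrableOn_Ioc_of_le hR).1 hint).const_mul _)
    measurableSet_Ioc fun r hr => ?_
  have hr0 : 0 < r := zero_lt_one.trans hr.1
  calc r ^ (d - 1) * radialMajorant α d n L r
      ≤ (L * r) ^ (2 * n) * r ^ (-2 * α - 1) :=
        (pow_mul_radialMajorant_le hα hd n L hr0).trans (by gcongr; exact min_le_right _ _)
    _ = L ^ (2 * n) * r ^ (2 * (n - α) - 1) := by
        rw [mul_pow, mul_assoc, ← Real.rpow_natCast r, ← Real.rpow_add hr0]
        congr 2
        push_cast
        ring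

lemma integral_Ioi_radialMajorant_le (hα : 0 < α) (hd : 1 ≤ d) (n : ℕ) (L : ℝ) {R : ℝ}
    (hR : 0 < R) :
    ∫ r in Set.Ioi R, r ^ (d - 1) * radialMajorant α d n L r ≤ R ^ (-2 * α) / (2 * α) := by
  have h := setIntegral_mono_on
    ((integrableOn_pow_mul_radialMajorant hα hd n L).mono_set (Set.Ioi_subset_Ioi hR.le))
    (integrableOn_Ioi_rpow_of_lt (a := -2 * α - 1) (by linarith) hR) measurableSet_Ioi
    fun r hr => (pow_mul_radialMajorant_le hα hd n L (hR.trans hr)).trans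
      (mul_le_of_le_one_left (Real.rpow_nonneg (hR.trans hr).le _) (min_le_left _ _))
  refine h.trans_eq ?_
  rw [integral_Ioi_rpow_of_lt (by linarith) hR, sub_add_cancel, neg_mul, neg_div_neg_eq]

lemma integral_radialMajorant_norm_le (hα : 0 < α) (hd : 1 ≤ d) (n : ℕ) (hL : 0 < L)
    (hL1 : L ≤ 1) :
    ∫ ξ : Fin d → ℝ, radialMajorant α d n L ‖ξ‖ ≤
      d * volume.real (Metric.ball (0 : Fin d → ℝ) 1) * (L ^ (2 * n) +
        L ^ (2 * n) * (∫ r in (1 : ℝ)..L⁻¹, r ^ (2 * (n - α) - 1)) + L ^ (2 * α) / (2 * α)) := by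
  have : Nonempty (Fin d) := ⟨⟨0, hd⟩⟩
  have hL' : 1 ≤ L⁻¹ := (one_le_inv₀ hL).2 hL1
  have hint := integrableOn_pow_mul_radialMajorant hα hd n L
  have hint1 := hint.mono_set (Set.Ioi_subset_Ioi zero_le_one)
  have htail := integral_Ioi_radialMajorant_le hα hd n L (inv_pos.2 hL)
  rw [Real.inv_rpow hL.le, ← Real.rpow_neg hL.le, neg_mul, neg_neg] at htail
  have hsplit : ∫ r in Set.Ioi 0, r ^ (d - 1) * radialMajorant α d n L r =
      (∫ r in Set.Ioc 0 1, r ^ (d - 1) * radialMajorant α d n L r) +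
        (∫ r in Set.Ioc 1 L⁻¹, r ^ (d - 1) * radialMajorant α d n L r) +
        ∫ r in Set.Ioi L⁻¹, r ^ (d - 1) * radialMajorant α d n L r := by
    rw [← Set.Ioc_union_Ioi_eq_Ioi zero_le_one, setIntegral_union (Set.Ioc_disjoint_Ioi le_rfl)
        measurableSet_Ioi (hint.mono_set Set.Ioc_subset_Ioi_self) hint1,
      ← Set.Ioc_union_Ioi_eq_Ioi hL', setIntegral_union (Set.Ioc_disjoint_Ioi le_rfl)
        measurableSet_Ioi (hint1.mono_set Set.Ioc_subset_Ioi_self)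
        (hint1.mono_set (Set.Ioi_subset_Ioi hL')), add_assoc]
  rw [integral_fun_norm_addHaar]
  simp only [Module.finrank_fin_fun, smul_eq_mul, nsmul_eq_mul, hsplit, ← mul_assoc]
  gcongr
  · exact integral_Ioc_zero_one_radialMajorant_le hα hd n hL.le
  · exact integral_Ioc_one_radialMajorant_le hα hd n L hL'

lemma exists_integral_rpow_le_logFactor (α : ℝ) :
    ∃ C : ℝ, ∀ L : ℝ, 0 < L →
      ∫ r in (1 : ℝ)..L⁻¹, r ^ (2 * (⌈α⌉₊ - α) - 1) ≤
        C * (L ^ (2 * (α - ⌈α⌉₊)) * logFactor α L) := by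
  by_cases h : IsNatVal α
  · refine ⟨1, fun L hL => le_of_eq ?_⟩
    rw [h.natCast_ceil_eq, sub_self, mul_zero, zero_sub, Real.rpow_zero, logFactor, if_pos h,
      one_mul, one_mul, one_div]
    simp_rw [Real.rpow_neg_one]
    rw [integral_inv_of_pos one_pos (inv_pos.2 hL), div_one]
  · have hlt : 0 < 2 * (⌈α⌉₊ - α) :=
      mul_pos two_pos (sub_pos.2 ((Nat.le_ceil α).lt_of_ne fun h' => h ⟨_, h'⟩))
    refine ⟨(2 * (⌈α⌉₊ - α))⁻¹, fun L hL => ?_⟩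
    rw [integral_rpow (Or.inl (by linarith)), sub_add_cancel, Real.one_rpow, logFactor, if_neg h,
      mul_one, Real.inv_rpow hL.le, ← Real.rpow_neg hL.le, ← mul_neg, neg_sub,
      inv_mul_eq_div]
    gcongr
    exact sub_le_self _ zero_le_one

lemma one_le_two_mul_logFactor (α : ℝ) (hL : 0 < L) (hL2 : L ≤ 1 / 2) :
    1 ≤ 2 * logFactor α L := by
  rw [logFactor]
  split_ifs
  · have h : Real.log 2 ≤ Real.log (1 / L) :=
      Real.log_le_log two_pos (by rw [le_div_iff₀ hL]; linarith)
    linarith [Real.log_two_gt_d9]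
  · norm_num

lemma exists_integral_radialMajorant_norm_le (hα : 0 < α) (hd : 1 ≤ d) :
    ∃ C : ℝ, ∀ L : ℝ, 0 < L → L ≤ 1 / 2 →
      ∫ ξ : Fin d → ℝ, radialMajorant α d ⌈α⌉₊ L ‖ξ‖ ≤ C * (L ^ (2 * α) * logFactor α L) := by
  obtain ⟨C, hmiddle⟩ := exists_integral_rpow_le_logFactor α
  refine ⟨d * volume.real (Metric.ball (0 : Fin d → ℝ) 1) * (2 + C + 2 / (2 * α)),
    fun L hL hL2 => ?_⟩
  have hL1 : L ≤ 1 := by linarith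
  have hlog : L ^ (2 * α) ≤ 2 * (L ^ (2 * α) * logFactor α L) := by
    rw [mul_left_comm]
    exact le_mul_of_one_le_right (by positivity) (one_le_two_mul_logFactor α hL hL2)
  have hpow : L ^ (2 * ⌈α⌉₊) ≤ L ^ (2 * α) := by
    rw [← Real.rpow_natCast]
    push_cast
    exact Real.rpow_le_rpow_of_exponent_ge hL hL1 (by linarith [Nat.le_ceil α])
  have hmid : L ^ (2 * ⌈α⌉₊) * (C * (L ^ (2 * (α - ⌈α⌉₊)) * logFactor α L)) =
      C * (L ^ (2 * α) * logFactor α L) := by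
    rw [mul_left_comm, ← mul_assoc (L ^ _), ← Real.rpow_natCast, ← Real.rpow_add hL]
    congr 4
    push_cast
    ring
  calc _ ≤ d * volume.real (Metric.ball (0 : Fin d → ℝ) 1) *
        (2 * (L ^ (2 * α) * logFactor α L) + C * (L ^ (2 * α) * logFactor α L) +
          2 * (L ^ (2 * α) * logFactor α L) / (2 * α)) := by
        refine (integral_radialMajorant_norm_le hα hd _ hL hL1).trans ?_
        rw [← hmid]
        gcongr
        · exact hpow.trans hlog
        · exact hmiddle L hL
    _ = _ := by ring

end RadialMajorant

section UpperBound

variable {α : ℝ} {d : ℕ}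

lemma besselWeight_le_norm {p : ℝ} (hp : 0 ≤ p) (ξ : Fin d → ℝ) :
    besselWeight p ξ ≤ (1 + ‖ξ‖ ^ 2) ^ (-p) := by
  rw [besselWeight_eq_norm_toLp]
  refine Real.rpow_le_rpow_of_nonpos (by positivity) ?_ (neg_nonpos.2 hp)
  gcongr
  exact (pi_norm_le_iff_of_nonneg (norm_nonneg _)).2
    fun t => PiLp.norm_apply_le (WithLp.toLp 2 ξ) t

lemma HasVanishingMoments.energy_le (hα : 0 < α) {ι : Type*} [Fintype ι] {l : ℕ}
    {y : ι → Fin d → ℝ} {b : ι → ℝ} (h : HasVanishingMoments l y b) {x : Fin d → ℝ} {c L : ℝ}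
    (hc : 0 ≤ c) (hL : 0 ≤ L) (hy : ∀ i t, |y i t - x t| ≤ c * L) :
    energy (α + (d : ℝ) / 2) y b ≤ (3 * (∑ i, |b i|) * max 1 (d * c) ^ (l + 1)) ^ 2 *
      ∫ ξ : Fin d → ℝ, radialMajorant α d (l + 1) L ‖ξ‖ := by
  rw [energy, ← integral_const_mul]
  refine integral_mono
    (integrable_norm_expSum_pow_mul _ _ 2 (integrable_besselWeight (by linarith)))
    ((integrable_radialMajorant_norm hα _ _).const_mul _) fun ξ => ?_
  rw [radialMajorant, ← mul_assoc]
  refine mul_le_mul (h.norm_expSum_sq_le hc hL hy ξ) (besselWeight_le_norm (by positivity) ξ)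
    (besselWeight_nonneg _ _) (mul_nonneg (sq_nonneg _) (le_min zero_le_one (by positivity)))

/-- The Lagrange polynomials evaluated at `x` reproduce polynomials, so the corresponding residual
functional has vanishing moments. -/
lemma IsNorming.exists_hasVanishingMoments {l m : ℕ} {z x : Fin d → ℝ} {s c : ℝ}
    {w : Fin m → Fin d → ℝ} (hm : m = (l + d).choose l) (hs : 0 < s) (hc : 0 ≤ c)
    (h : IsNorming l (cube d z s) w c) (hx : x ∈ cube d z s) :
    ∃ a : Fin m → ℝ, (∀ i, |a i| ≤ c) ∧ HasVanishingMoments l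
      (fun o : Option (Fin m) => o.elim x w) (fun o => o.elim 1 (-a)) := by
  obtain ⟨e, -, -, hbound, hrep⟩ := h.exists_lagrange hm hs hc
  refine ⟨fun i => MvPolynomial.eval x (e i), fun i => hbound i x hx, fun P hP => ?_⟩
  have hPx := congrArg (MvPolynomial.eval x) (hrep P hP)
  simp only [map_sum, MvPolynomial.smul_eval] at hPx
  simp only [Fintype.sum_option, Option.elim_none, Option.elim_some, hPx, one_mul, Pi.neg_apply,
    neg_mul, Finset.sum_neg_distrib, mul_comm (MvPolynomial.eval x _), add_neg_cancel]

lemma exists_predictionError_le (hα : 0 < α) (hd : 1 ≤ d) {cL cd cN : ℝ} (hcL : 0 ≤ cL)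
    (hcd : 0 < cd) (hcN : 0 ≤ cN) {m : ℕ} (hm : m = (lbelow α + d).choose (lbelow α)) :
    ∃ C : ℝ, ∀ (L : ℝ) (x : Fin d → ℝ) (w : Fin m → Fin d → ℝ), 0 < L → L ≤ 1 / 2 →
      GeomHyp α d cL cd cN L w x →
      ∃ a : Fin m → ℝ, predictionError α w x a ≤ C * (L ^ (2 * α) * logFactor α L) := by
  obtain ⟨C, hint⟩ := exists_integral_radialMajorant_norm_le hα hd
  refine ⟨(3 * (1 + m * cN) * max 1 (d * cL) ^ ⌈α⌉₊) ^ 2 * C, fun L x w hL hL2 h => ?_⟩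
  obtain ⟨z, s, hsd, hsL, hw, hx, -, hnorm⟩ := h.exists_cube hm
  obtain ⟨a, ha, hmom⟩ := hnorm.exists_hasVanishingMoments hm ((mul_pos hcd hL).trans_le hsd) hcN hx
  have hy (o : Option (Fin m)) (t : Fin d) : |o.elim x w t - x t| ≤ cL * L := by
    refine (abs_sub_le_of_mem_cube ?_ hx t).trans hsL
    rcases o with _ | i <;> [exact hx; exact hw i]
  have hsum : ∑ o : Option (Fin m), |o.elim 1 (-a)| ≤ 1 + m * cN := by
    simpa [Fintype.sum_option] using Finset.sum_le_sum fun i (_ : i ∈ Finset.univ) => ha i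
  refine ⟨a, (hmom.energy_le hα hcL hL.le hy).trans ?_⟩
  rw [lbelow_add_one hα]
  calc _ ≤ (3 * (1 + m * cN) * max 1 (d * cL) ^ ⌈α⌉₊) ^ 2 *
        (C * (L ^ (2 * α) * logFactor α L)) := by
        gcongr
        · exact integral_nonneg fun ξ => radialMajorant_nonneg _ _ _ _ _
        · exact hint L hL hL2
    _ = _ := by ring

end UpperBound

lemma GeomHyp.injective {α : ℝ} {d m : ℕ} {cL cd cN L : ℝ} {w : Fin m → Fin d → ℝ}
    {x : Fin d → ℝ} (h : GeomHyp α d cL cd cN L w x) (hcdL : 0 < cd * L) :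
    Function.Injective w := by
  obtain ⟨z, s, -, -, -, -, hsep, -⟩ := h
  intro i j hij
  by_contra hne
  obtain ⟨t, ht⟩ := hsep i j hne
  rw [hij, sub_self, abs_zero] at ht
  exact ht.not_gt hcdL

/-- Theorem `var`: under the geometric hypotheses at scale `L ∈ (0,1/2]`,
the conditional variance is of order `L^{2α}` (with an extra `ln(1/L)` factor when `α ∈ ℕ`),
with constants depending only on `α, d, c_d, c_L, c_N`. -/
theorem stmt12 (α : ℝ) (hα : 0 < α) (d : ℕ) (hd : 1 ≤ d)
    (cL cd cN : ℝ) (hcd : 0 < cd) (hcLcd : cd ≤ cL) (hcN : 0 < cN) :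
    ∃ c₁ c₂ : ℝ, 0 < c₁ ∧ c₁ ≤ c₂ ∧
      ∀ L : ℝ, 0 < L → L ≤ 1 / 2 → ∀ x : Fin d → ℝ,
        ∀ w : Fin ((lbelow α + d).choose (lbelow α)) → Fin d → ℝ,
          GeomHyp α d cL cd cN L w x →
          IsUnit (maternMat α d w).det ∧
          (¬ IsNatVal α →
            c₁ * L ^ (2 * α) ≤ condVar α d w x ∧
              condVar α d w x ≤ c₂ * L ^ (2 * α)) ∧
          (IsNatVal α →
            c₁ * (L ^ (2 * α) * Real.log (1 / L)) ≤ condVar α d w x ∧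
              condVar α d w x ≤ c₂ * (L ^ (2 * α) * Real.log (1 / L))) := by
  have hcL : 0 ≤ cL := hcd.le.trans hcLcd
  obtain ⟨c, hc, hlower⟩ := exists_mul_le_predictionError hα hd hcL hcd hcN.le rfl
  obtain ⟨C, hupper⟩ := exists_predictionError_le hα hd hcL hcd hcN.le rfl
  refine ⟨c, max c C, hc, le_max_left _ _, fun L hL hL2 x w h => ?_⟩
  have hw : Function.Injective w := h.injective (mul_pos hcd hL)
  have hleast : IsLeast (Set.range (predictionError α w x)) (condVar α d w x) :=
    isLeast_condVar hα hw x
  have hlow : c * (L ^ (2 * α) * logFactor α L) ≤ condVar α d w x := by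
    obtain ⟨a, ha⟩ := hleast.1
    exact ha ▸ hlower L x w hL hL2 h a
  have hup : condVar α d w x ≤ max c C * (L ^ (2 * α) * logFactor α L) := by
    obtain ⟨a, ha⟩ := hupper L x w hL hL2 h
    have hΛ : 0 ≤ logFactor α L := logFactor_nonneg α hL (by linarith)
    refine (hleast.2 ⟨a, rfl⟩).trans (ha.trans ?_)
    gcongr
    exact le_max_right _ _
  refine ⟨(Matrix.isUnit_iff_isUnit_det _).1 (posDef_maternMat hα hw).isUnit, fun hN => ?_,
    fun hN => ?_⟩
  · simpa only [logFactor, if_neg hN, mul_one] using And.intro hlow hup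
  · simpa only [logFactor, if_pos hN] using And.intro hlow hup
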